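/- Let {A^k}_{k≥0} be a greedy HOOI sequence. If Ā is a block-nondegenerate limit point of {A^k}, then Ā is a critical point and the entire sequence converges to Ā, i.e., Aₙ^k → Āₙ in Frobenius norm for every n as k → ∞. -/

import Mathlib

open Matrix BigOperators Filter

def froSq {ι κ : Type*} [Fintype ι] [Fintype κ] (M : Matrix ι κ ℝ) : ℝ :=
  ∑ i, ∑ j, (M i j) ^ 2

noncomputable def fro {ι κ : Type*} [Fintype ι] [Fintype κ] (M : Matrix ι κ ℝ) : ℝ :=
  Real.sqrt (froSq M)

noncomputable def eigList {m : ℕ} {κ : Type*} [Fintype κ] (Y : Matrix (Fin m) κ ℝ) : List ℝ :=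
  ((((Finset.univ : Finset (Fin m)).val.map
      (fun j => (Matrix.isHermitian_mul_conjTranspose_self Y).eigenvalues j)).sort (· ≤ ·)).reverse)

noncomputable def sval {m : ℕ} {κ : Type*} [Fintype κ] (Y : Matrix (Fin m) κ ℝ) (i : ℕ) : ℝ :=
  Real.sqrt ((eigList Y).getD (i - 1) 0)

/-- Feasibility: every factor matrix has orthonormal columns. -/
def TFeas {N : ℕ} {I r : Fin N → ℕ}
    (A : (n : Fin N) → Matrix (Fin (I n)) (Fin (r n)) ℝ) : Prop :=
  ∀ n, (A n)ᵀ * A n = 1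

/-- `Gₙ(A) = unfoldₙ(X ×₁ A₁ᵀ ⋯ ×_{n−1} A_{n−1}ᵀ ×_{n+1} A_{n+1}ᵀ ⋯ ×_N A_Nᵀ)`. -/
noncomputable def Gmat {N : ℕ} {I r : Fin N → ℕ} (X : ((n : Fin N) → Fin (I n)) → ℝ)
    (A : (n : Fin N) → Matrix (Fin (I n)) (Fin (r n)) ℝ) (n : Fin N) :
    Matrix (Fin (I n)) ((m : {m : Fin N // m ≠ n}) → Fin (r m.1)) ℝ :=
  fun j c => ∑ idx : ((m : {m : Fin N // m ≠ n}) → Fin (I m.1)),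
    X (fun i => if h : i = n then Fin.cast (by rw [h]) j else idx ⟨i, h⟩) *
      ∏ m : {m : Fin N // m ≠ n}, A m.1 (idx m) (c m)

/-- `f(A) = ‖X ×₁ A₁ᵀ ⋯ ×_N A_Nᵀ‖_F²`. -/
noncomputable def fval {N : ℕ} {I r : Fin N → ℕ} (X : ((n : Fin N) → Fin (I n)) → ℝ)
    (A : (n : Fin N) → Matrix (Fin (I n)) (Fin (r n)) ℝ) : ℝ :=
  ∑ c : ((n : Fin N) → Fin (r n)),
    (∑ idx : ((n : Fin N) → Fin (I n)), X idx * ∏ n, A n (idx n) (c n)) ^ 2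

/-- A critical point: `Gₙ(A)Gₙ(A)ᵀAₙ = AₙAₙᵀGₙ(A)Gₙ(A)ᵀAₙ` for all `n`. -/
def Critical {N : ℕ} {I r : Fin N → ℕ} (X : ((n : Fin N) → Fin (I n)) → ℝ)
    (A : (n : Fin N) → Matrix (Fin (I n)) (Fin (r n)) ℝ) : Prop :=
  ∀ n, Gmat X A n * (Gmat X A n)ᵀ * A n =
    A n * (A n)ᵀ * (Gmat X A n * (Gmat X A n)ᵀ * A n)

/-- A block-wise maximizer. -/
def BlockMax {N : ℕ} {I r : Fin N → ℕ} (X : ((n : Fin N) → Fin (I n)) → ℝ)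
    (A : (n : Fin N) → Matrix (Fin (I n)) (Fin (r n)) ℝ) : Prop :=
  ∀ n, ∀ B : Matrix (Fin (I n)) (Fin (r n)) ℝ, Bᵀ * B = 1 →
    froSq (Bᵀ * Gmat X A n) ≤ froSq ((A n)ᵀ * Gmat X A n)

/-- Block-nondegeneracy: `σ_{rₙ}(Gₙ(A)) > σ_{rₙ+1}(Gₙ(A))` for all `n`. -/
def NonDeg {N : ℕ} {I r : Fin N → ℕ} (X : ((n : Fin N) → Fin (I n)) → ℝ)
    (A : (n : Fin N) → Matrix (Fin (I n)) (Fin (r n)) ℝ) : Prop :=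
  ∀ n, sval (Gmat X A n) (r n + 1) < sval (Gmat X A n) (r n)

/-- The hybrid tuple used in HOOI: the already-updated blocks `i < n` come from
`Anew`, the rest from `Aold`. -/
def hyb {N : ℕ} {I r : Fin N → ℕ}
    (Aold Anew : (n : Fin N) → Matrix (Fin (I n)) (Fin (r n)) ℝ) (n : Fin N) :
    (i : Fin N) → Matrix (Fin (I i)) (Fin (r i)) ℝ :=
  fun i => if i < n then Anew i else Aold i

/-- `Gₙ^k = unfoldₙ(X ×₁ (A₁^{k+1})ᵀ ⋯ ×_{n−1} (A_{n−1}^{k+1})ᵀ ×_{n+1} (A_{n+1}^k)ᵀ ⋯ ×_N (A_N^k)ᵀ)`. -/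
noncomputable def Gseq {N : ℕ} {I r : Fin N → ℕ} (X : ((n : Fin N) → Fin (I n)) → ℝ)
    (A : ℕ → (n : Fin N) → Matrix (Fin (I n)) (Fin (r n)) ℝ) (k : ℕ) (n : Fin N) :
    Matrix (Fin (I n)) ((m : {m : Fin N // m ≠ n}) → Fin (r m.1)) ℝ :=
  Gmat X (hyb (A k) (A (k + 1)) n) n

/-- A HOOI sequence. -/
def IsHOOI {N : ℕ} {I r : Fin N → ℕ} (X : ((n : Fin N) → Fin (I n)) → ℝ)
    (A : ℕ → (n : Fin N) → Matrix (Fin (I n)) (Fin (r n)) ℝ) : Prop :=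
  (∀ k, TFeas (A k)) ∧
  ∀ k (n : Fin N), ∀ B : Matrix (Fin (I n)) (Fin (r n)) ℝ, Bᵀ * B = 1 →
    froSq (Bᵀ * Gseq X A k n) ≤ froSq ((A (k + 1) n)ᵀ * Gseq X A k n)

/-- A greedy HOOI sequence. -/
def IsGreedyHOOI {N : ℕ} {I r : Fin N → ℕ} (X : ((n : Fin N) → Fin (I n)) → ℝ)
    (A : ℕ → (n : Fin N) → Matrix (Fin (I n)) (Fin (r n)) ℝ) : Prop :=
  IsHOOI X A ∧
  ∀ k (n : Fin N), ∀ B : Matrix (Fin (I n)) (Fin (r n)) ℝ, Bᵀ * B = 1 →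
    (∀ C : Matrix (Fin (I n)) (Fin (r n)) ℝ, Cᵀ * C = 1 →
      froSq (Cᵀ * Gseq X A k n) ≤ froSq (Bᵀ * Gseq X A k n)) →
    fro (A (k + 1) n - A k n) ≤ fro (B - A k n)

/-- `Ā` is a limit point of the sequence `{A^k}` (blockwise in Frobenius norm). -/
def IsLimitPt {N : ℕ} {I r : Fin N → ℕ}
    (A : ℕ → (n : Fin N) → Matrix (Fin (I n)) (Fin (r n)) ℝ)
    (Abar : (n : Fin N) → Matrix (Fin (I n)) (Fin (r n)) ℝ) : Prop :=
  ∃ φ : ℕ → ℕ, StrictMono φ ∧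
    ∀ n, Tendsto (fun k => fro (A (φ k) n - Abar n)) atTop (nhds 0)

/-- `‖A − B‖_F = √(∑ₙ ‖Aₙ − Bₙ‖_F²)` on tuples. -/
noncomputable def tdist {N : ℕ} {I r : Fin N → ℕ}
    (A B : (n : Fin N) → Matrix (Fin (I n)) (Fin (r n)) ℝ) : ℝ :=
  Real.sqrt (∑ n, froSq (A n - B n))

/-- A local maximizer of `f` over the feasible set. -/
def LocalMax {N : ℕ} {I r : Fin N → ℕ} (X : ((n : Fin N) → Fin (I n)) → ℝ)
    (A : (n : Fin N) → Matrix (Fin (I n)) (Fin (r n)) ℝ) : Prop :=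
  TFeas A ∧ ∃ ε > (0 : ℝ), ∀ B : (n : Fin N) → Matrix (Fin (I n)) (Fin (r n)) ℝ,
    TFeas B → tdist B A ≤ ε → fval X B ≤ fval X A

/-- A globally optimal solution. -/
def GlobalMax {N : ℕ} {I r : Fin N → ℕ} (X : ((n : Fin N) → Fin (I n)) → ℝ)
    (A : (n : Fin N) → Matrix (Fin (I n)) (Fin (r n)) ℝ) : Prop :=
  TFeas A ∧ ∀ B : (n : Fin N) → Matrix (Fin (I n)) (Fin (r n)) ℝ,
    TFeas B → fval X B ≤ fval X A

/-!
Write `f` for `fval X`. On the feasible set `criticalDefect X A` is half the gradient of the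
polynomial `f`, so near `Ā` a Łojasiewicz inequality `|f A - f Ā| ^ θ ≤ 2 ‖criticalDefect X A‖`
holds for some `θ < 1`. It is obtained by valuations instead of subanalytic geometry: a sequence of
counterexamples is a point over Robinson's field of growth rates (complex sequences compared
modulo an infinitesimal scale). This field is algebraically closed and spherically complete, hence,
by Zorn's lemma, carries a derivation `D` for which `D z` and `z` have the same size unless `z` is
close to a constant. By the chain rule, `D` applied to `f` is too small for the gradient to violate
the inequality along the sequence.

Block-nondegeneracy is a spectral gap. It persists near `Ā` and makes every block problem grow
quadratically away from its maximizers, so a greedy step satisfies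
`‖Aᵏ⁺¹ - Aᵏ‖² ≤ C (f Aᵏ⁺¹ - f Aᵏ)`. The `n`-th defect vanishes right after the `n`-th update and is
Lipschitz, so `‖criticalDefect X Aᵏ‖ ≤ L ‖Aᵏ⁺¹ - Aᵏ‖`. With the Łojasiewicz inequality these two
bounds give a trajectory of finite length once it comes close to `Ā`.
-/

/-- The value of an asymptotic scale over `ℝ`: an ultrametric norm which is trivial on the
real constants, so that it only records orders of growth. -/
class IsTriviallyNormedOverReal (K : Type*) [NormedField K] [Algebra ℝ K] : Prop where
  norm_algebraMap : ∀ r : ℝ, r ≠ 0 → ‖algebraMap ℝ K r‖ = 1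

section EulerianElements

variable {K : Type*} [NormedField K] [Algebra ℝ K]

/-- A dual number `z + wε` is Eulerian if `w` could be the value at `z` of a derivation that acts
to leading order as `z ↦ log ‖z‖ • z`, the way the Euler operator `t d/dt` acts on generalized
power series in `t` whose norm is `‖t‖ = e`. A ring homomorphism `z ↦ z + (D z)ε` with Eulerian
values encodes such a derivation `D`. -/
def IsEulerian (p : DualNumber K) : Prop :=
  p = 0 ∨ ‖p.snd - Real.log ‖p.fst‖ • p.fst‖ < ‖p.fst‖

lemma IsEulerian.zero : IsEulerian (0 : DualNumber K) := Or.inl rfl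

lemma IsEulerian.one : IsEulerian (1 : DualNumber K) := by
  right
  simp

lemma IsEulerian.fst_ne_zero {p : DualNumber K} (h : IsEulerian p) (hp : p ≠ 0) : p.fst ≠ 0 :=
  norm_pos_iff.1 ((norm_nonneg _).trans_lt (h.resolve_left hp))

lemma IsEulerian.of_mul_eq_one {p q : DualNumber K} (hp : IsEulerian p) (hpq : p * q = 1) :
    IsEulerian q := by
  have hfst : p.fst * q.fst = 1 := by simpa using congr(TrivSqZeroExt.fst $hpq)
  have hsnd : p.fst * q.snd + p.snd * q.fst = 0 := by
    simpa [mul_comm] using congr(TrivSqZeroExt.snd $hpq)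
  have hp0 : p ≠ 0 := by rintro rfl; simp at hfst
  have hq1 : 0 < ‖q.fst‖ := norm_pos_iff.2 (right_ne_zero_of_mul_eq_one hfst)
  have hnorm : ‖p.fst‖ * ‖q.fst‖ = 1 := by rw [← norm_mul, hfst, norm_one]
  have hlog : Real.log ‖q.fst‖ = -Real.log ‖p.fst‖ := by
    rw [eq_inv_of_mul_eq_one_right hnorm, Real.log_inv]
  have hdiff : q.snd - Real.log ‖q.fst‖ • q.fst =
      -(q.fst ^ 2 * (p.snd - Real.log ‖p.fst‖ • p.fst)) := by
    simp only [hlog, Algebra.smul_def, map_neg]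
    linear_combination q.fst * hsnd - (q.snd + algebraMap ℝ K (Real.log ‖p.fst‖) * q.fst) * hfst
  refine Or.inr ?_
  calc ‖q.snd - Real.log ‖q.fst‖ • q.fst‖
      = ‖q.fst‖ ^ 2 * ‖p.snd - Real.log ‖p.fst‖ • p.fst‖ := by
        rw [hdiff, norm_neg, norm_mul, norm_pow]
    _ < ‖q.fst‖ ^ 2 * ‖p.fst‖ := by gcongr; exact hp.resolve_left hp0
    _ = ‖q.fst‖ := by linear_combination ‖q.fst‖ * hnorm

section Ultrametric

variable [IsUltrametricDist K]

lemma IsEulerian.mul {p q : DualNumber K} (hp : IsEulerian p) (hq : IsEulerian q) :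
    IsEulerian (p * q) := by
  rcases eq_or_ne p 0 with rfl | hp0
  · simpa using IsEulerian.zero
  rcases eq_or_ne q 0 with rfl | hq0
  · simpa using IsEulerian.zero
  have hp1 := norm_pos_iff.2 (hp.fst_ne_zero hp0)
  have hq1 := norm_pos_iff.2 (hq.fst_ne_zero hq0)
  have leibniz : (p * q).snd - Real.log ‖(p * q).fst‖ • (p * q).fst =
      p.fst * (q.snd - Real.log ‖q.fst‖ • q.fst) + q.fst * (p.snd - Real.log ‖p.fst‖ • p.fst) := by
    simp only [TrivSqZeroExt.fst_mul, DualNumber.snd_mul, norm_mul,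
      Real.log_mul hp1.ne' hq1.ne', Algebra.smul_def, map_add]
    ring
  refine Or.inr ?_
  rw [leibniz, TrivSqZeroExt.fst_mul, norm_mul]
  refine (IsUltrametricDist.norm_add_le_max _ _).trans_lt (max_lt ?_ ?_)
  · rw [norm_mul]
    exact mul_lt_mul_of_pos_left (hq.resolve_left hq0) hp1
  · rw [norm_mul, mul_comm ‖p.fst‖]
    exact mul_lt_mul_of_pos_left (hp.resolve_left hp0) hq1

lemma IsEulerian.pow {p : DualNumber K} (hp : IsEulerian p) (n : ℕ) : IsEulerian (p ^ n) := by
  induction n with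
  | zero => simpa using IsEulerian.one
  | succ n ih => exact pow_succ p n ▸ ih.mul hp

end Ultrametric

variable [IsTriviallyNormedOverReal K]

lemma norm_real_smul_le (r : ℝ) (x : K) : ‖r • x‖ ≤ ‖x‖ := by
  rcases eq_or_ne r 0 with rfl | hr
  · simp
  · rw [Algebra.smul_def, norm_mul, IsTriviallyNormedOverReal.norm_algebraMap r hr, one_mul]

lemma isEulerian_algebraMap (r : ℝ) : IsEulerian (algebraMap ℝ (DualNumber K) r) := by
  rcases eq_or_ne r 0 with rfl | hr
  · simpa using IsEulerian.zero
  · refine Or.inr ?_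
    have hfst : (algebraMap ℝ (DualNumber K) r).fst = algebraMap ℝ K r := rfl
    have hsnd : (algebraMap ℝ (DualNumber K) r).snd = 0 := rfl
    simp [hfst, hsnd, IsTriviallyNormedOverReal.norm_algebraMap r hr]

lemma norm_log_sub_log_smul_lt {y : K} {R : ℝ} (hR : 0 < R) (hyR : ‖y‖ ≤ R) :
    ‖(Real.log ‖y‖ - Real.log R) • y‖ < R := by
  rcases hyR.eq_or_lt with h | h
  · simpa [h] using hR
  · exact (norm_real_smul_le _ _).trans_lt h

variable [IsUltrametricDist K]

lemma IsEulerian.norm_snd_sub_smul_lt {p : DualNumber K} (hp : IsEulerian p) {R : ℝ} (hR : 0 < R)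
    (hpR : ‖p.fst‖ ≤ R) : ‖p.snd - Real.log R • p.fst‖ < R := by
  rcases hp with rfl | hp
  · simpa using hR
  have hsplit : p.snd - Real.log R • p.fst = (p.snd - Real.log ‖p.fst‖ • p.fst) +
      (Real.log ‖p.fst‖ - Real.log R) • p.fst := by
    rw [sub_smul, sub_add_sub_cancel]
  rw [hsplit]
  exact (IsUltrametricDist.norm_add_le_max _ _).trans_lt
    (max_lt (hp.trans_le hpR) (norm_log_sub_log_smul_lt hR hpR))

lemma norm_snd_sum_sub_smul_lt {ι : Type*} (s : Finset ι) {p : ι → DualNumber K} {R : ℝ}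
    (hR : 0 < R) (hp : ∀ i ∈ s, IsEulerian (p i)) (hpR : ∀ i ∈ s, ‖(p i).fst‖ ≤ R) :
    ‖(∑ i ∈ s, p i).snd - Real.log R • (∑ i ∈ s, p i).fst‖ < R := by
  refine Finset.sum_induction p (fun q ↦ ‖q.snd - Real.log R • q.fst‖ < R) (fun a b ha hb ↦ ?_)
    (by simpa using hR) (fun i hi ↦ (hp i hi).norm_snd_sub_smul_lt hR (hpR i hi))
  have hsplit : (a + b).snd - Real.log R • (a + b).fst =
      (a.snd - Real.log R • a.fst) + (b.snd - Real.log R • b.fst) := by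
    simp only [TrivSqZeroExt.snd_add, TrivSqZeroExt.fst_add, smul_add]
    abel
  rw [hsplit]
  exact (IsUltrametricDist.norm_add_le_max _ _).trans_lt (max_lt ha hb)

lemma IsEulerian.add_of_norm_lt {p q : DualNumber K} (hp : IsEulerian p) (hq : IsEulerian q)
    (h : ‖p.fst‖ < ‖q.fst‖) : IsEulerian (p + q) := by
  have hsum : ‖(p + q).fst‖ = ‖q.fst‖ := by
    rw [TrivSqZeroExt.fst_add, IsUltrametricDist.norm_add_eq_max_of_norm_ne_norm h.ne,
      max_eq_right h.le]
  have := norm_snd_sum_sub_smul_lt Finset.univ (p := ![p, q]) ((norm_nonneg _).trans_lt h)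
    (by simp [Fin.forall_fin_two, hp, hq]) (by simp [Fin.forall_fin_two, h.le])
  refine Or.inr ?_
  rw [hsum]
  simpa only [Fin.sum_univ_two, Matrix.cons_val_zero, Matrix.cons_val_one] using this

end EulerianElements

section GaussBound

open Polynomial

variable {K : Type*} [NormedField K] [IsUltrametricDist K]

lemma norm_coeff_mul_mul_pow_le {P Q : K[X]} {y : K}
    (hP : ∀ i, ‖P.coeff i‖ * ‖y‖ ^ i ≤ ‖P.eval y‖) (hQ : ∀ i, ‖Q.coeff i‖ * ‖y‖ ^ i ≤ ‖Q.eval y‖)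
    (n : ℕ) : ‖(P * Q).coeff n‖ * ‖y‖ ^ n ≤ ‖(P * Q).eval y‖ := by
  rw [eval_mul, norm_mul, ← norm_pow, ← norm_mul, coeff_mul, Finset.sum_mul]
  refine IsUltrametricDist.norm_sum_le_of_forall_le_of_nonneg (by positivity) fun ij hij ↦ ?_
  have hn : ij.1 + ij.2 = n := by simpa using hij
  calc ‖P.coeff ij.1 * Q.coeff ij.2 * y ^ n‖
      = (‖P.coeff ij.1‖ * ‖y‖ ^ ij.1) * (‖Q.coeff ij.2‖ * ‖y‖ ^ ij.2) := by
        rw [← hn, norm_mul, norm_mul, norm_pow]; ring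
    _ ≤ ‖P.eval y‖ * ‖Q.eval y‖ := mul_le_mul (hP _) (hQ _) (by positivity) (norm_nonneg _)

lemma norm_coeff_X_sub_C_mul_pow_le {y b : K} (hb : ‖y‖ ≤ ‖y - b‖) (n : ℕ) :
    ‖(X - C b).coeff n‖ * ‖y‖ ^ n ≤ ‖(X - C b).eval y‖ := by
  have hby : ‖b‖ ≤ ‖y - b‖ := by
    simpa [norm_sub_rev b, hb] using IsUltrametricDist.norm_add_le_max y (b - y)
  match n with
  | 0 => simpa using hby
  | 1 => simpa [coeff_X, coeff_C] using hb
  | n + 2 => simp [coeff_X]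

lemma norm_coeff_mul_pow_le_of_splits {P : K[X]} (hP : P.Splits) {y : K}
    (hy : ∀ b ∈ P.roots, ‖y‖ ≤ ‖y - b‖) (n : ℕ) : ‖P.coeff n‖ * ‖y‖ ^ n ≤ ‖P.eval y‖ := by
  have hC (c : K) (i : ℕ) : ‖(C c).coeff i‖ * ‖y‖ ^ i ≤ ‖(C c).eval y‖ := by
    rcases i with _ | i <;> simp [coeff_C]
  rw [hP.eq_prod_roots]
  refine norm_coeff_mul_mul_pow_le (hC _) ?_ n
  refine Multiset.prod_induction (fun Q : K[X] ↦ ∀ i, ‖Q.coeff i‖ * ‖y‖ ^ i ≤ ‖Q.eval y‖) _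
    (fun _ _ ↦ norm_coeff_mul_mul_pow_le) (by simpa using hC 1) fun Q hQ ↦ ?_
  obtain ⟨b, hb, rfl⟩ := Multiset.mem_map.1 hQ
  exact norm_coeff_X_sub_C_mul_pow_le (hy b hb)

variable [Algebra ℝ K] [IsTriviallyNormedOverReal K]

lemma norm_coeff_mul_pow_le_of_derivative {P : K[X]} {y : K} (hroot : P.eval y = 0)
    (hP' : P.derivative.Splits) (hy : ∀ b ∈ P.derivative.roots, ‖y‖ ≤ ‖y - b‖) (n : ℕ) :
    ‖P.coeff n‖ * ‖y‖ ^ n ≤ ‖P.derivative.eval y‖ * ‖y‖ := by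
  have hsucc (i : ℕ) : ‖P.coeff (i + 1)‖ * ‖y‖ ^ (i + 1) ≤ ‖P.derivative.eval y‖ * ‖y‖ := by
    have hi : ‖(i + 1 : K)‖ = 1 := by
      simpa using IsTriviallyNormedOverReal.norm_algebraMap (K := K) (i + 1 : ℝ) (by positivity)
    calc ‖P.coeff (i + 1)‖ * ‖y‖ ^ (i + 1) = ‖P.derivative.coeff i‖ * ‖y‖ ^ i * ‖y‖ := by
          rw [coeff_derivative, norm_mul, hi]; ring
      _ ≤ ‖P.derivative.eval y‖ * ‖y‖ := by gcongr; exact norm_coeff_mul_pow_le_of_splits hP' hy i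
  rcases n with _ | n
  · have hconst : P.coeff 0 * y ^ 0 =
        -∑ i ∈ Finset.range P.natDegree, P.coeff (i + 1) * y ^ (i + 1) := by
      rw [eval_eq_sum_range, Finset.sum_range_succ'] at hroot
      linear_combination hroot
    rw [← norm_pow, ← norm_mul, hconst, norm_neg]
    refine IsUltrametricDist.norm_sum_le_of_forall_le_of_nonneg (by positivity) fun i _ ↦ ?_
    simpa only [norm_mul, norm_pow] using hsucc i
  · exact hsucc n

end GaussBound

section AlgebraicExtension

open Polynomial

lemma eval_ne_zero_of_not_splits {G : Type*} [Field G] {Q : G[X]} (hQ : ¬Q.Splits)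
    (hmin : ∀ P : G[X], P.degree < Q.degree → P.Splits) (a : G) : Q.eval a ≠ 0 := by
  intro ha
  have hfactor := mul_divByMonic_eq_iff_isRoot.2 ha
  have hQ0 : Q ≠ 0 := by rintro rfl; exact hQ .zero
  refine hQ (hfactor ▸ (Splits.X_sub_C a).mul (hmin _ ?_))
  exact degree_divByMonic_lt Q (X - C a) hQ0 (by simp)

variable {G K : Type*} [Field G] [NormedField K]

/-- The ring homomorphism underlying `φ`, which forgets the derivation that `φ` encodes. -/
def baseHom (φ : G →+* DualNumber K) : G →+* K :=
  (TrivSqZeroExt.fstHom K K K).toRingHom.comp φ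

lemma fst_eval₂ (φ : G →+* DualNumber K) (P : G[X]) (p : DualNumber K) :
    (P.eval₂ φ p).fst = P.eval₂ (baseHom φ) p.fst :=
  P.hom_eval₂ φ (TrivSqZeroExt.fstHom K K K).toRingHom p

lemma fst_sub_map (φ : G →+* DualNumber K) (p : DualNumber K) (a : G) :
    (p - φ a).fst = p.fst - baseHom φ a := rfl

lemma eval₂_add_inr (φ : G →+* DualNumber K) (P : G[X]) (p : DualNumber K) (w : K) :
    P.eval₂ φ (p + TrivSqZeroExt.inr w) =
      P.eval₂ φ p + TrivSqZeroExt.inr (P.derivative.eval₂ (baseHom φ) p.fst * w) := by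
  have hsq : (TrivSqZeroExt.inr w : DualNumber K) ^ 2 = 0 := by
    rw [sq, TrivSqZeroExt.inr_mul_inr]
  rw [← fst_eval₂, eval₂_eq_eval_map, eval₂_eq_eval_map,
    eval₂_eq_eval_map, eval_add_of_sq_eq_zero _ _ _ hsq,
    derivative_map]
  congr 1
  ext <;> simp [mul_comm]

variable [IsUltrametricDist K] [Algebra ℝ K]

lemma isEulerian_eval₂_of_splits {P : G[X]} (hP : P.Splits)
    {φ : G →+* DualNumber K} (hφ : ∀ a, IsEulerian (φ a)) {p : DualNumber K}
    (hp : ∀ a, IsEulerian (p - φ a)) : IsEulerian (P.eval₂ φ p) := by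
  rw [hP.eq_prod_roots, eval₂_mul, eval₂_C]
  refine (hφ _).mul ?_
  rw [← coe_eval₂RingHom, map_multiset_prod]
  refine Multiset.prod_induction IsEulerian _ (fun _ _ ↦ IsEulerian.mul) .one fun q hq ↦ ?_
  obtain ⟨Q, hQ, rfl⟩ := Multiset.mem_map.1 hq
  obtain ⟨a, -, rfl⟩ := Multiset.mem_map.1 hQ
  simpa using hp a

variable [IsTriviallyNormedOverReal K]

/- `p₀ = y + (log ‖y‖ • y)ε` is Eulerian by design. The hypothesis says that no term of `q (p₀)`
exceeds the linear term of `q` at `y` in norm, so evaluating `q` at `p₀ + w₀ε = p` forces `w₀` to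
be negligible. -/
lemma isEulerian_of_eval₂_eq_zero {φ : G →+* DualNumber K} (hφ : ∀ a, IsEulerian (φ a))
    {q : G[X]} {p : DualNumber K} (hroot : q.eval₂ φ p = 0) (hp : p.fst ≠ 0)
    (hq : q.derivative.eval₂ (baseHom φ) p.fst ≠ 0)
    (hcoeff : ∀ i, ‖baseHom φ (q.coeff i)‖ * ‖p.fst‖ ^ i ≤
      ‖q.derivative.eval₂ (baseHom φ) p.fst‖ * ‖p.fst‖) : IsEulerian p := by
  set d := q.derivative.eval₂ (baseHom φ) p.fst
  set w₀ := p.snd - Real.log ‖p.fst‖ • p.fst with hw₀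
  set p₀ : DualNumber K := p - TrivSqZeroExt.inr w₀ with hp₀
  have hfst : p₀.fst = p.fst := by simp [hp₀]
  have hp₀E : IsEulerian p₀ := by
    right
    simpa [hp₀, hw₀] using hp
  have heval : q.eval₂ φ p₀ = -TrivSqZeroExt.inr (d * w₀) := by
    have := eval₂_add_inr φ q p₀ w₀
    rw [hfst, hp₀, sub_add_cancel, hroot] at this
    exact eq_neg_of_add_eq_zero_left this.symm
  have hsum : ‖(q.eval₂ φ p₀).snd - Real.log (‖d‖ * ‖p.fst‖) • (q.eval₂ φ p₀).fst‖ <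
      ‖d‖ * ‖p.fst‖ := by
    rw [eval₂_eq_sum_range]
    refine norm_snd_sum_sub_smul_lt _ (mul_pos (norm_pos_iff.2 hq) (norm_pos_iff.2 hp))
      (fun i _ ↦ (hφ _).mul (hp₀E.pow i)) fun i _ ↦ ?_
    rw [TrivSqZeroExt.fst_mul, TrivSqZeroExt.fst_pow, hfst, norm_mul, norm_pow]
    exact hcoeff i
  have hdw : ‖d‖ * ‖w₀‖ < ‖d‖ * ‖p.fst‖ := by simpa [heval] using hsum
  exact Or.inr (lt_of_mul_lt_mul_left hdw (norm_nonneg d))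

lemma isEulerian_sub_map_of_closest {φ : G →+* DualNumber K} (hφ : ∀ a, IsEulerian (φ a))
    {Q : G[X]} (hQ' : Q.derivative.Splits) {p : DualNumber K} (hroot : Q.eval₂ φ p = 0)
    (hp : ∀ a, p.fst ≠ baseHom φ a) (hderiv : Q.derivative.eval₂ (baseHom φ) p.fst ≠ 0) {a : G}
    (ha : ∀ b ∈ Q.derivative.roots, ‖p.fst - baseHom φ a‖ ≤ ‖p.fst - baseHom φ b‖) :
    IsEulerian (p - φ a) := by
  set ψ := baseHom φ
  set q := Q.taylor a with hq
  have hq' : q.derivative = Q.derivative.taylor a := by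
    simp [hq, taylor_apply, derivative_comp]
  have hq'eval : q.derivative.eval₂ ψ (p - φ a).fst = Q.derivative.eval₂ ψ p.fst := by
    rw [hq', eval₂_eq_eval_map, map_taylor, taylor_eval,
      fst_sub_map, sub_add_cancel, eval₂_eq_eval_map]
  have hqroot : q.eval₂ φ (p - φ a) = 0 := by
    rw [hq, eval₂_eq_eval_map, map_taylor, taylor_eval,
      sub_add_cancel, ← eval₂_eq_eval_map, hroot]
  have hsplits : q.derivative.Splits := by
    rw [hq', taylor_apply]
    exact hQ'.comp_X_add_C a
  have hclosest : ∀ β ∈ (q.map ψ).derivative.roots, ‖(p - φ a).fst‖ ≤ ‖(p - φ a).fst - β‖ := by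
    rw [derivative_map, hsplits.roots_map, Multiset.forall_mem_map_iff]
    intro b hb
    have hb' : b + a ∈ Q.derivative.roots := by
      rw [mem_roots_iff_aeval_eq_zero (by rintro h; simp [h] at hderiv)]
      simpa [hq', taylor_eval] using isRoot_of_mem_roots hb
    rw [fst_sub_map, sub_sub, add_comm (baseHom φ a), ← map_add]
    exact ha _ hb'
  refine isEulerian_of_eval₂_eq_zero hφ hqroot (sub_ne_zero.2 (hp a)) (hq'eval ▸ hderiv) fun i ↦ ?_
  have := norm_coeff_mul_pow_le_of_derivative (P := q.map ψ) (y := (p - φ a).fst)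
    (by rw [← eval₂_eq_eval_map, ← fst_eval₂, hqroot, TrivSqZeroExt.fst_zero])
    ((derivative_map q ψ).symm ▸ hsplits.map ψ) hclosest i
  rwa [coeff_map, derivative_map, ← eval₂_eq_eval_map] at this

lemma isEulerian_sub_map {φ : G →+* DualNumber K} (hφ : ∀ a, IsEulerian (φ a))
    {Q : G[X]} (hQ' : Q.derivative.Splits) {p : DualNumber K} (hroot : Q.eval₂ φ p = 0)
    (hp : ∀ a, p.fst ≠ baseHom φ a) (hderiv : Q.derivative.eval₂ (baseHom φ) p.fst ≠ 0) (a : G) :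
    IsEulerian (p - φ a) := by
  by_cases ha : ∀ b ∈ Q.derivative.roots, ‖p.fst - baseHom φ a‖ ≤ ‖p.fst - baseHom φ b‖
  · exact isEulerian_sub_map_of_closest hφ hQ' hroot hp hderiv ha
  push Not at ha
  obtain ⟨c, hc, hca⟩ := ha
  classical
  obtain ⟨b, hb, hbmin⟩ := Q.derivative.roots.toFinset.exists_min_image
    (fun b ↦ ‖p.fst - baseHom φ b‖) ⟨c, by simpa using hc⟩
  simp only [Multiset.mem_toFinset] at hb hbmin
  have hba : ‖(p - φ b).fst‖ < ‖(φ (b - a)).fst‖ := by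
    by_contra! hle
    refine (hbmin c hc).not_gt (hca.trans_le ?_)
    have hsplit : p.fst - baseHom φ a = (p - φ b).fst + (φ (b - a)).fst := by
      rw [fst_sub_map, map_sub, fst_sub_map]
      exact (sub_add_sub_cancel _ _ _).symm
    rw [hsplit]
    exact (IsUltrametricDist.norm_add_le_max _ _).trans (max_le le_rfl hle)
  have hsplit : p - φ a = (p - φ b) + φ (b - a) := by rw [map_sub, sub_add_sub_cancel]
  exact hsplit ▸ (isEulerian_sub_map_of_closest hφ hQ' hroot hp hderiv hbmin).add_of_norm_lt
    (hφ _) hba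

/- Modulo a polynomial of least degree among those that do not split, every polynomial is congruent
to one that splits. -/
lemma exists_root_isEulerian_eval₂ [IsAlgClosed K] {φ : G →+* DualNumber K}
    (hφ : ∀ a, IsEulerian (φ a)) {Q : G[X]} (hQ : ¬Q.Splits)
    (hmin : ∀ P : G[X], P.degree < Q.degree → P.Splits) :
    ∃ p : DualNumber K, Q.eval₂ φ p = 0 ∧ ∀ P : G[X], IsEulerian (P.eval₂ φ p) := by
  have hQ0 : Q ≠ 0 := by rintro rfl; exact hQ .zero
  have hdeg : Q.degree ≠ 0 := fun h ↦ hQ (Splits.of_degree_le_one (by simp [h]))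
  obtain ⟨z, hz⟩ := IsAlgClosed.exists_eval₂_eq_zero (baseHom φ) Q hdeg
  have hz_notMem (a : G) : z ≠ baseHom φ a := by
    rintro rfl
    rw [eval₂_at_apply, map_eq_zero] at hz
    exact eval_ne_zero_of_not_splits hQ hmin a hz
  have : CharZero K := Algebra.charZero_of_charZero ℝ K
  have : CharZero G := (baseHom φ).charZero
  have hQ'0 : Q.derivative ≠ 0 := derivative_ne_zero.2 fun h ↦
    hQ (.of_natDegree_le_one (by simp [h]))
  have hQ' : Q.derivative.Splits := hmin _ (degree_derivative_lt hQ0)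
  have hderiv : Q.derivative.eval₂ (baseHom φ) z ≠ 0 := by
    rw [eval₂_eq_eval_map]
    intro h
    obtain ⟨a, ha⟩ := hQ'.mem_range_of_isRoot hQ'0 h
    exact hz_notMem a ha.symm
  set w := -(Q.eval₂ φ (TrivSqZeroExt.inl z)).snd / Q.derivative.eval₂ (baseHom φ) z with hw
  set p : DualNumber K := TrivSqZeroExt.inl z + TrivSqZeroExt.inr w
  have hp : p.fst = z := by simp [p]
  have hroot : Q.eval₂ φ p = 0 := by
    rw [eval₂_add_inr, TrivSqZeroExt.fst_inl, hw, mul_div_cancel₀ _ hderiv]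
    ext
    · simpa [fst_eval₂] using hz
    · simp
  have hsub (a : G) : IsEulerian (p - φ a) :=
    isEulerian_sub_map hφ hQ' hroot (hp ▸ hz_notMem) (hp ▸ hderiv) a
  refine ⟨p, hroot, fun P ↦ ?_⟩
  rw [← EuclideanDomain.mod_add_div P Q, eval₂_add, eval₂_mul, hroot, zero_mul, add_zero]
  exact isEulerian_eval₂_of_splits (hmin _ (degree_mod_lt P hQ0)) hφ hsub

end AlgebraicExtension

section ImmediateExtension

/-- A normed group is (countably) spherically complete if every nested sequence of closed balls has
a common point. The hypothesis only uses that later centres lie in earlier balls. -/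
def IsSphericallyComplete (K : Type*) [SeminormedAddCommGroup K] : Prop :=
  ∀ (c : ℕ → K) (ρ : ℕ → ℝ), (∀ i j, i ≤ j → ‖c j - c i‖ ≤ ρ i) → ∃ w, ∀ i, ‖w - c i‖ ≤ ρ i

lemma IsSphericallyComplete.exists_norm_sub_lt {K : Type*} [SeminormedAddCommGroup K]
    [IsUltrametricDist K] (hK : IsSphericallyComplete K) {ι : Type*} [Nonempty ι] {c : ι → K}
    {ρ : ι → ℝ} (hρ : ∀ a, 0 < ρ a) (hc : ∀ a b, ρ b ≤ ρ a → ‖c b - c a‖ < ρ a) :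
    ∃ w, ∀ a, ‖w - c a‖ < ρ a := by
  have hglb : IsGLB (Set.range ρ) (⨅ a, ρ a) :=
    isGLB_ciInf ⟨0, by rintro _ ⟨a, rfl⟩; exact (hρ a).le⟩
  by_cases hmin : (⨅ a, ρ a) ∈ Set.range ρ
  · obtain ⟨m, hm⟩ := hmin
    exact ⟨c m, fun a ↦ hc a m (hm ▸ hglb.1 ⟨a, rfl⟩)⟩
  obtain ⟨_, hanti, -, htendsto, hrange⟩ :=
    hglb.exists_seq_strictAnti_tendsto_of_notMem hmin (Set.range_nonempty ρ)
  choose u hu using hrange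
  obtain rfl : ρ ∘ u = _ := funext hu
  obtain ⟨w, hw⟩ := hK (c ∘ u) (ρ ∘ u) fun i j hij ↦ (hc _ _ (hanti.antitone hij)).le
  refine ⟨w, fun a ↦ ?_⟩
  have hlt : (⨅ a, ρ a) < ρ a := (hglb.1 ⟨a, rfl⟩).lt_of_ne fun h ↦ hmin ⟨a, h.symm⟩
  obtain ⟨n, hn⟩ := (htendsto.eventually_lt_const hlt).exists
  rw [← sub_add_sub_cancel w (c (u n)) (c a)]
  exact (IsUltrametricDist.norm_add_le_max _ _).trans_lt
    (max_lt ((hw n).trans_lt hn) (hc a (u n) hn.le))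

open Polynomial

variable {G K : Type*} [Field G] [NormedField K] [IsUltrametricDist K] [Algebra ℝ K]
  [IsTriviallyNormedOverReal K]

lemma exists_fst_eq_isEulerian_sub_map (hK : IsSphericallyComplete K) {φ : G →+* DualNumber K}
    (hφ : ∀ a, IsEulerian (φ a)) {z : K} (hz : ∀ a, z ≠ baseHom φ a) :
    ∃ p : DualNumber K, p.fst = z ∧ ∀ a, IsEulerian (p - φ a) := by
  set ψ := baseHom φ
  let c (a : G) : K := (φ a).snd + Real.log ‖z - ψ a‖ • (z - ψ a)
  have hpos (a : G) : 0 < ‖z - ψ a‖ := norm_pos_iff.2 (sub_ne_zero.2 (hz a))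
  have hc (a b : G) (hab : ‖z - ψ b‖ ≤ ‖z - ψ a‖) : ‖c b - c a‖ < ‖z - ψ a‖ := by
    have hfst : (φ (b - a)).fst = (z - ψ a) - (z - ψ b) := by
      rw [sub_sub_sub_cancel_left, ← map_sub]
      rfl
    have hball : ‖(φ (b - a)).fst‖ ≤ ‖z - ψ a‖ := by
      rw [hfst, sub_eq_add_neg]
      refine (IsUltrametricDist.norm_add_le_max _ _).trans (max_le le_rfl ?_)
      rwa [norm_neg]
    have hsplit : c b - c a = ((φ (b - a)).snd - Real.log ‖z - ψ a‖ • (φ (b - a)).fst) +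
        (Real.log ‖z - ψ b‖ - Real.log ‖z - ψ a‖) • (z - ψ b) := by
      rw [hfst, map_sub, TrivSqZeroExt.snd_sub]
      module
    rw [hsplit]
    exact (IsUltrametricDist.norm_add_le_max _ _).trans_lt
      (max_lt ((hφ _).norm_snd_sub_smul_lt (hpos a) hball) (norm_log_sub_log_smul_lt (hpos a) hab))
  obtain ⟨w, hw⟩ := hK.exists_norm_sub_lt hpos hc
  refine ⟨TrivSqZeroExt.inl z + TrivSqZeroExt.inr w, by simp, fun a ↦ Or.inr ?_⟩
  have hfst : (φ a).fst = ψ a := rfl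
  simpa [hfst, c, sub_sub] using hw a

lemma exists_fst_eq_isEulerian_eval₂ [IsAlgClosed G] (hK : IsSphericallyComplete K)
    {φ : G →+* DualNumber K} (hφ : ∀ a, IsEulerian (φ a)) (z : K) :
    ∃ p : DualNumber K, p.fst = z ∧ ∀ P : G[X], IsEulerian (P.eval₂ φ p) := by
  by_cases hz : ∃ a, z = baseHom φ a
  · obtain ⟨a, rfl⟩ := hz
    exact ⟨φ a, rfl, fun P ↦ by rw [eval₂_at_apply]; exact hφ _⟩
  · push Not at hz
    obtain ⟨p, hp, hsub⟩ := exists_fst_eq_isEulerian_sub_map hK hφ hz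
    exact ⟨p, hp, fun P ↦ isEulerian_eval₂_of_splits (IsAlgClosed.splits P) hφ hsub⟩

end ImmediateExtension

section EulerianDerivation

open Polynomial

lemma exists_derivation_of_ringHom {K : Type*} [Field K] [Algebra ℝ K] {σ : K →+* DualNumber K}
    (hfst : ∀ z, (σ z).fst = z)
    (hreal : ∀ r : ℝ, σ (algebraMap ℝ K r) = algebraMap ℝ (DualNumber K) r) :
    ∃ D : Derivation ℝ K K, ∀ z, D z = (σ z).snd := by
  refine ⟨Derivation.mk' ⟨⟨fun z ↦ (σ z).snd, fun z w ↦ by simp⟩, fun r z ↦ ?_⟩ fun z w ↦ ?_,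
    fun z ↦ rfl⟩
  · change (σ (r • z)).snd = r • (σ z).snd
    rw [Algebra.smul_def, map_mul, hreal, ← Algebra.smul_def, TrivSqZeroExt.snd_smul]
  · change (σ (z * w)).snd = z • (σ w).snd + w • (σ z).snd
    rw [map_mul, DualNumber.snd_mul, hfst, hfst, smul_eq_mul, smul_eq_mul, mul_comm w]

variable {K : Type*} [NormedField K] [Algebra ℝ K]

lemma exists_maximal_isEulerian_subring (S₀ : Subring (DualNumber K))
    (hS₀ : ∀ p ∈ S₀, IsEulerian p) :
    ∃ S, S₀ ≤ S ∧ Maximal (fun S : Subring (DualNumber K) ↦ ∀ p ∈ S, IsEulerian p) S := by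
  refine zorn_le_nonempty₀ {S : Subring (DualNumber K) | ∀ p ∈ S, IsEulerian p}
    (fun c hc hchain S hS ↦ ⟨sSup c, fun p hp ↦ ?_, fun T hT ↦ le_sSup hT⟩) S₀ hS₀
  obtain ⟨T, hT, hpT⟩ := (Subring.mem_sSup_of_directedOn ⟨S, hS⟩ hchain.directedOn).1 hp
  exact hc hT p hpT

lemma noZeroDivisors_of_isEulerian {S : Subring (DualNumber K)} (hS : ∀ p ∈ S, IsEulerian p) :
    NoZeroDivisors S where
  eq_zero_or_eq_zero_of_mul_eq_zero {p q} hpq := by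
    by_contra! h
    have hp := (hS p p.2).fst_ne_zero (by simpa using h.1)
    have hq := (hS q q.2).fst_ne_zero (by simpa using h.2)
    have hfst : (p : DualNumber K).fst * (q : DualNumber K).fst = 0 := by
      simpa using congr(TrivSqZeroExt.fst (Subtype.val $hpq))
    exact mul_ne_zero hp hq hfst

universe u

lemma exists_field_isEulerian_of_subring {K : Type u} [NormedField K] [IsUltrametricDist K]
    [Algebra ℝ K] {S : Subring (DualNumber K)} (hS : ∀ p ∈ S, IsEulerian p) :
    ∃ (F : Type u) (_ : Field F) (φ : F →+* DualNumber K), S ≤ φ.range ∧ ∀ a, IsEulerian (φ a) := by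
  have := noZeroDivisors_of_isEulerian hS
  have : IsDomain S := {}
  have hunit (q : nonZeroDivisors S) : IsUnit (S.subtype q) := by
    rw [TrivSqZeroExt.isUnit_iff_isUnit_fst, isUnit_iff_ne_zero]
    exact (hS _ q.1.2).fst_ne_zero (by simp)
  refine ⟨FractionRing S, inferInstance, IsLocalization.lift hunit, fun p hp ↦ ?_, fun a ↦ ?_⟩
  · exact ⟨algebraMap S _ ⟨p, hp⟩, IsLocalization.lift_eq hunit _⟩
  · obtain ⟨p, q, rfl⟩ := IsLocalization.exists_mk'_eq (nonZeroDivisors S) a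
    obtain ⟨u, hu⟩ := hunit q
    have hlift : IsLocalization.lift hunit (IsLocalization.mk' (FractionRing S) p q) =
        ↑u⁻¹ * (p : DualNumber K) :=
      (IsLocalization.lift_mk'_spec _ _ _ _).2 (by rw [← hu, Units.mul_inv_cancel_left]; rfl)
    have hinv : IsEulerian (u⁻¹ : (DualNumber K)ˣ).val :=
      (hS _ q.1.2).of_mul_eq_one ((congrArg (· * _) hu.symm).trans u.mul_inv)
    exact hlift ▸ hinv.mul (hS p p.2)

-- The last clause says that `φ` does not extend to any larger simple extension `F[p]`.
lemma exists_maximal_isEulerian_ringHom {K : Type u} [NormedField K] [IsUltrametricDist K]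
    [Algebra ℝ K] [IsTriviallyNormedOverReal K] :
    ∃ (F : Type u) (_ : Field F) (φ : F →+* DualNumber K),
      (∀ r : ℝ, algebraMap ℝ (DualNumber K) r ∈ φ.range) ∧ (∀ a, IsEulerian (φ a)) ∧
      ∀ p, (∀ P : F[X], IsEulerian (P.eval₂ φ p)) → p ∈ φ.range := by
  obtain ⟨S, hS₀, hS⟩ := exists_maximal_isEulerian_subring (algebraMap ℝ (DualNumber K)).range
    (by rintro _ ⟨r, rfl⟩; exact isEulerian_algebraMap r)
  obtain ⟨F, _, φ, hSφ, hφ⟩ := exists_field_isEulerian_of_subring hS.prop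
  refine ⟨F, _, φ, fun r ↦ hSφ (hS₀ ⟨r, rfl⟩), hφ, fun p hp ↦ ?_⟩
  have hrange : ∀ x ∈ (eval₂RingHom φ p).range, IsEulerian x := by
    rintro _ ⟨P, rfl⟩
    exact hp P
  have hle : S ≤ (eval₂RingHom φ p).range := fun x hx ↦ by
    obtain ⟨a, rfl⟩ := hSφ hx
    exact ⟨C a, eval₂_C φ p⟩
  exact hSφ (hS.le_of_ge hrange hle ⟨X, eval₂_X φ p⟩)

variable [IsUltrametricDist K] [IsTriviallyNormedOverReal K]

lemma isAlgClosed_of_maximal [IsAlgClosed K] {F : Type*} [Field F] {φ : F →+* DualNumber K}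
    (hφ : ∀ a, IsEulerian (φ a))
    (hmax : ∀ p, (∀ P : F[X], IsEulerian (P.eval₂ φ p)) → p ∈ φ.range) : IsAlgClosed F := by
  refine ⟨fun P ↦ degree_lt_wf.induction P fun P hmin ↦ ?_⟩
  by_contra hP
  obtain ⟨p, hroot, hp⟩ := exists_root_isEulerian_eval₂ hφ hP hmin
  obtain ⟨a, rfl⟩ := hmax p hp
  refine eval_ne_zero_of_not_splits hP hmin a ((map_eq_zero (baseHom φ)).1 ?_)
  rw [eval₂_at_apply] at hroot
  exact congr(TrivSqZeroExt.fst $hroot)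

theorem exists_eulerian_derivation [IsAlgClosed K] (hK : IsSphericallyComplete K) :
    ∃ D : Derivation ℝ K K, ∀ z ≠ 0, ‖D z - Real.log ‖z‖ • z‖ < ‖z‖ := by
  obtain ⟨F, _, φ, hreal, hφ, hmax⟩ := exists_maximal_isEulerian_ringHom (K := K)
  have := isAlgClosed_of_maximal hφ hmax
  have hsurj : Function.Surjective (baseHom φ) := fun z ↦ by
    obtain ⟨p, hp, hpE⟩ := exists_fst_eq_isEulerian_eval₂ hK hφ z
    obtain ⟨a, rfl⟩ := hmax p hpE
    exact ⟨a, hp⟩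
  let e : F ≃+* K := RingEquiv.ofBijective (baseHom φ) ⟨(baseHom φ).injective, hsurj⟩
  have hfst (z : K) : (φ (e.symm z)).fst = z := e.apply_symm_apply z
  obtain ⟨D, hD⟩ := exists_derivation_of_ringHom (σ := φ.comp e.symm.toRingHom) hfst fun r ↦ by
    obtain ⟨a, ha⟩ := hreal r
    have hea : e.symm (algebraMap ℝ K r) = a :=
      (e.symm_apply_eq).2 congr(TrivSqZeroExt.fst $ha.symm)
    simpa [hea] using ha
  refine ⟨D, fun z hz ↦ ?_⟩
  have hz' : φ (e.symm z) ≠ 0 := fun h ↦ hz (by rw [← hfst z, h, TrivSqZeroExt.fst_zero])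
  simpa [hD, hfst] using (hφ (e.symm z)).resolve_left hz'

end EulerianDerivation

section GrowthValue

open Topology ENNReal

/-- A sequence of positive exponents tending to zero. It fixes a scale of growth: a complex sequence
`c` is measured by the ultralimit of `‖c k‖ ^ s k`, so that constants get the value `1`. -/
structure GrowthScale where
  exponent : ℕ → ℝ
  exponent_pos : ∀ k, 0 < exponent k
  tendsto_exponent : Tendsto exponent atTop (𝓝 0)

variable (s : GrowthScale)

/-- The value of a complex sequence: the limit of `‖c k‖ ^ s k` along a fixed nonprincipal
ultrafilter on `ℕ`. -/
noncomputable def growth (c : ℕ → ℂ) : ℝ≥0∞ :=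
  ((hyperfilter ℕ).map fun k ↦ ‖c k‖ₑ ^ s.exponent k).lim

lemma tendsto_growth (c : ℕ → ℂ) :
    Tendsto (fun k ↦ ‖c k‖ₑ ^ s.exponent k) (hyperfilter ℕ) (𝓝 (growth s c)) :=
  Ultrafilter.le_nhds_lim ((hyperfilter ℕ).map fun k ↦ ‖c k‖ₑ ^ s.exponent k)

variable {s} {c d : ℕ → ℂ}

lemma growth_eq_of_tendsto {v : ℝ≥0∞}
    (h : Tendsto (fun k ↦ ‖c k‖ₑ ^ s.exponent k) (hyperfilter ℕ) (𝓝 v)) : growth s c = v :=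
  tendsto_nhds_unique (tendsto_growth s c) h

lemma growth_zero : growth s 0 = 0 :=
  growth_eq_of_tendsto <| tendsto_const_nhds.congr fun k ↦ by simp [s.exponent_pos k]

lemma growth_congr (h : ∀ᶠ k in hyperfilter ℕ, c k = d k) : growth s c = growth s d :=
  growth_eq_of_tendsto <| (tendsto_growth s d).congr' <| h.mono fun k hk ↦ by simp only [hk]

lemma growth_mono (h : ∀ k, ‖c k‖ ≤ ‖d k‖) : growth s c ≤ growth s d :=
  le_of_tendsto_of_tendsto' (tendsto_growth s c) (tendsto_growth s d) fun k ↦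
    ENNReal.rpow_le_rpow (enorm_le_iff_norm_le.2 (h k)) (s.exponent_pos k).le

lemma growth_mul (hc : growth s c ≠ ⊤) (hd : growth s d ≠ ⊤) :
    growth s (c * d) = growth s c * growth s d :=
  growth_eq_of_tendsto <|
    (ENNReal.Tendsto.mul (tendsto_growth s c) (.inr hd) (tendsto_growth s d) (.inr hc)).congr
      fun k ↦ by rw [Pi.mul_apply, enorm_mul, mul_rpow_of_nonneg _ _ (s.exponent_pos k).le]

variable (s) in
lemma tendsto_rpow_exponent {x : ℝ≥0∞} (h₀ : x ≠ 0) (h₁ : x ≠ ⊤) :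
    Tendsto (fun k ↦ x ^ s.exponent k) (hyperfilter ℕ) (𝓝 1) := by
  lift x to NNReal using h₁
  have hx : x ≠ 0 := by simpa using h₀
  have hcont := (tendsto_const_nhds (x := x)).nnrpow s.tendsto_exponent (.inl hx)
  have h := (ENNReal.tendsto_coe.2 hcont).mono_left Nat.hyperfilter_le_atTop
  simpa [ENNReal.coe_rpow_of_ne_zero hx] using h

lemma growth_const {z : ℂ} (hz : z ≠ 0) : growth s (fun _ ↦ z) = 1 :=
  growth_eq_of_tendsto (tendsto_rpow_exponent s (by simpa using hz) (by simp))

lemma growth_add_le_max (c d : ℕ → ℂ) : growth s (c + d) ≤ max (growth s c) (growth s d) := by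
  have hlim := ENNReal.Tendsto.mul (tendsto_rpow_exponent s (x := 2) (by simp) (by simp))
    (.inl one_ne_zero) ((tendsto_growth s c).max (tendsto_growth s d)) (.inr one_ne_top)
  rw [one_mul] at hlim
  refine le_of_tendsto_of_tendsto' (tendsto_growth s _) hlim fun k ↦ ?_
  have hk := (s.exponent_pos k).le
  calc ‖(c + d) k‖ₑ ^ s.exponent k
      ≤ (2 * max ‖c k‖ₑ ‖d k‖ₑ) ^ s.exponent k := by
        gcongr
        rw [two_mul]
        exact (enorm_add_le _ _).trans (add_le_add (le_max_left _ _) (le_max_right _ _))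
    _ = 2 ^ s.exponent k * max (‖c k‖ₑ ^ s.exponent k) (‖d k‖ₑ ^ s.exponent k) := by
        rw [ENNReal.mul_rpow_of_nonneg _ _ hk, (ENNReal.monotone_rpow_of_nonneg hk).map_max]

lemma eventually_ne_zero_of_growth_ne_zero (hc : growth s c ≠ 0) :
    ∀ᶠ k in hyperfilter ℕ, c k ≠ 0 := by
  filter_upwards [(tendsto_growth s c).eventually_ne hc] with k hk h
  simp [h, s.exponent_pos k] at hk

lemma growth_inv (hc : growth s c ≠ 0) : growth s c⁻¹ = (growth s c)⁻¹ := by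
  refine growth_eq_of_tendsto <| (tendsto_inv_iff.2 (tendsto_growth s c)).congr' ?_
  filter_upwards [eventually_ne_zero_of_growth_ne_zero hc] with k hk
  rw [Pi.inv_apply, enorm_inv hk, ENNReal.inv_rpow]

end GrowthValue

section RobinsonField

open Topology ENNReal

variable (s : GrowthScale)

/-- The algebra of complex sequences of finite value. -/
noncomputable def moderate : Subalgebra ℝ (ℕ → ℂ) where
  carrier := {c | growth s c ≠ ⊤}
  mul_mem' hc hd := by
    rw [Set.mem_ofPred_eq, growth_mul hc hd]
    exact ENNReal.mul_ne_top hc hd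
  add_mem' hc hd := ((growth_add_le_max _ _).trans_lt (max_lt hc.lt_top hd.lt_top)).ne
  algebraMap_mem' r := by
    rcases eq_or_ne r 0 with rfl | hr
    · simp [growth_zero]
    · exact ((growth_const (s := s) (Complex.ofReal_ne_zero.2 hr)).trans_lt one_lt_top).ne

/-- The value as a valuation on the moderate sequences. -/
noncomputable def growthValuation : Valuation (moderate s) NNReal where
  toFun c := (growth s c).toNNReal
  map_zero' := by simp [growth_zero]
  map_one' := by simp [show growth s 1 = 1 from growth_const one_ne_zero]
  map_mul' c d := by
    rw [← ENNReal.toNNReal_mul, ← growth_mul c.2 d.2]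
    rfl
  map_add_le_max' c d := by
    rw [← ENNReal.coe_le_coe, ENNReal.coe_max, ENNReal.coe_toNNReal (c + d).2,
      ENNReal.coe_toNNReal c.2, ENNReal.coe_toNNReal d.2]
    exact growth_add_le_max _ _

lemma coe_growthValuation (c : moderate s) : (growthValuation s c : ℝ≥0∞) = growth s c :=
  ENNReal.coe_toNNReal c.2

instance isMaximal_supp_growthValuation : (growthValuation s).supp.IsMaximal := by
  have hmem (x : moderate s) : x ∈ (growthValuation s).supp ↔ growth s x = 0 := by
    rw [Valuation.mem_supp_iff, ← ENNReal.coe_eq_zero, coe_growthValuation]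
  refine Ideal.isMaximal_iff.2 ⟨fun h ↦ ?_, fun J x hJ hx hxJ ↦ ?_⟩
  · simp [Valuation.mem_supp_iff] at h
  rw [hmem] at hx
  let y : moderate s := ⟨(x : ℕ → ℂ)⁻¹, (growth_inv hx).trans_ne (ENNReal.inv_ne_top.2 hx)⟩
  have hxy : 1 - x * y ∈ (growthValuation s).supp := by
    rw [hmem, ← growth_zero (s := s)]
    refine growth_congr ?_
    filter_upwards [eventually_ne_zero_of_growth_ne_zero hx] with k hk
    exact sub_eq_zero.2 (mul_inv_cancel₀ hk).symm
  simpa using J.add_mem (hJ hxy) (J.mul_mem_right y hxJ)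

lemma exists_eventually_diagonal {l : Filter ℕ} (hl : l ≤ atTop) {T : ℕ → ℕ → Prop}
    (hT : ∀ m, ∀ᶠ k in l, T m k) : ∃ M : ℕ → ℕ, ∀ m, ∀ᶠ k in l, m ≤ M k ∧ T (M k) k := by
  classical
  refine ⟨fun k ↦ Nat.findGreatest (fun m ↦ T m k) k, fun m ↦ ?_⟩
  filter_upwards [hT m, hl (eventually_ge_atTop m)] with k hk hmk
  exact ⟨Nat.le_findGreatest hmk hk, Nat.findGreatest_spec (P := fun m ↦ T m k) hmk hk⟩

variable {s} in
lemma mem_moderate_of_norm_le {c b : ℕ → ℂ} (hb : b ∈ moderate s) (h : ∀ k, ‖c k‖ ≤ ‖b k‖) :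
    c ∈ moderate s :=
  ((growth_mono h).trans_lt hb.lt_top).ne

open Polynomial in
variable {s} in
lemma mem_moderate_of_isRoot {Q : (moderate s)[X]} (hQ : Q.Monic) {x : ℕ → ℂ}
    (hx : ∀ k, (Q.map ((Pi.evalRingHom _ k).comp (moderate s).subtype)).IsRoot (x k)) :
    x ∈ moderate s := by
  let ev (k : ℕ) : moderate s →+* ℂ := (Pi.evalRingHom _ k).comp (moderate s).subtype
  let b : ℕ → ℂ := 1 + ∑ i ∈ Finset.range Q.natDegree, fun k ↦ (‖ev k (Q.coeff i)‖ : ℂ)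
  have hb : b ∈ moderate s :=
    add_mem (one_mem _) <| sum_mem fun i _ ↦
      mem_moderate_of_norm_le (Q.coeff i).2 fun k ↦ by simp [ev]
  refine mem_moderate_of_norm_le hb fun k ↦ ?_
  have hbk : ‖b k‖ = 1 + ∑ i ∈ Finset.range Q.natDegree, ‖ev k (Q.coeff i)‖ := by
    have : b k = ((1 + ∑ i ∈ Finset.range Q.natDegree, ‖ev k (Q.coeff i)‖ : ℝ) : ℂ) := by simp [b]
    rw [this, Complex.norm_real, Real.norm_of_nonneg (by positivity)]
  have hQk := hQ.map (ev k)
  have hsup : (Finset.range Q.natDegree).sup (fun i ↦ ‖ev k (Q.coeff i)‖₊) ≤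
      ∑ i ∈ Finset.range Q.natDegree, ‖ev k (Q.coeff i)‖₊ :=
    Finset.sup_le fun i hi ↦ Finset.single_le_sum (f := fun i ↦ ‖ev k (Q.coeff i)‖₊) (by simp) hi
  calc ‖x k‖ ≤ cauchyBound (Q.map (ev k)) := ((hx k).norm_lt_cauchyBound hQk.ne_zero).le
    _ = (Finset.range Q.natDegree).sup (fun i ↦ ‖ev k (Q.coeff i)‖₊) + 1 := by
      simp [cauchyBound, hQk.leadingCoeff, hQ.natDegree_map]
    _ ≤ ‖b k‖ := by
      rw [hbk, add_comm]
      gcongr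
      exact (NNReal.coe_le_coe.2 hsup).trans_eq (by simp)

/-- Robinson's field of growth rates: moderate sequences modulo those of value zero. -/
def RobinsonField : Type := moderate s ⧸ (growthValuation s).supp

namespace RobinsonField

noncomputable instance : Field (RobinsonField s) :=
  Ideal.Quotient.field (growthValuation s).supp

noncomputable instance : Algebra ℝ (RobinsonField s) :=
  inferInstanceAs (Algebra ℝ (moderate s ⧸ (growthValuation s).supp))

/-- The class of a moderate sequence. -/
noncomputable def mk : moderate s →ₐ[ℝ] RobinsonField s :=
  Ideal.Quotient.mkₐ ℝ (growthValuation s).supp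

lemma mk_surjective : Function.Surjective (mk s) := Ideal.Quotient.mk_surjective

/-- The valuation of Robinson's field, which becomes its norm. -/
noncomputable def valuation : Valuation (RobinsonField s) NNReal :=
  (growthValuation s).onQuot le_rfl

noncomputable instance : NormedField (RobinsonField s) :=
  AbsoluteValue.toNormedField
    { toFun := fun x ↦ valuation s x
      map_mul' := by simp
      nonneg' := fun _ ↦ NNReal.zero_le_coe
      eq_zero' := by simp
      add_le' := fun x y ↦ by
        exact_mod_cast ((valuation s).map_add x y).trans (max_le_add_of_nonneg zero_le zero_le) }

instance : IsUltrametricDist (RobinsonField s) :=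
  IsUltrametricDist.isUltrametricDist_of_forall_norm_add_le_max_norm fun x y ↦ by
    exact_mod_cast (valuation s).map_add x y

lemma norm_mk (c : moderate s) : ‖mk s c‖ = (growth s c).toReal := rfl

instance : IsTriviallyNormedOverReal (RobinsonField s) where
  norm_algebraMap r hr := by
    rw [← (mk s).commutes, norm_mk]
    change (growth s fun _ ↦ (r : ℂ)).toReal = 1
    simp [growth_const (Complex.ofReal_ne_zero.2 hr)]

open Polynomial in
instance : IsAlgClosed (RobinsonField s) := by
  refine IsAlgClosed.of_exists_root _ fun P hP hirr ↦ ?_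
  have hlift : P ∈ lifts (mk s : moderate s →+* RobinsonField s) :=
    (lifts_iff_coeff_lifts _).2 fun i ↦ mk_surjective s (P.coeff i)
  obtain ⟨Q, rfl, hdeg, hQ⟩ := lifts_and_natDegree_eq_and_monic hlift hP
  let ev (k : ℕ) : moderate s →+* ℂ := (Pi.evalRingHom _ k).comp (moderate s).subtype
  have hroot (k : ℕ) : ∃ x, (Q.map (ev k)).IsRoot x := by
    refine IsAlgClosed.exists_root _ (natDegree_pos_iff_degree_pos.1 ?_).ne'
    rw [hQ.natDegree_map, hdeg]
    exact hirr.natDegree_pos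
  choose x hx using hroot
  let y : moderate s := ⟨x, mem_moderate_of_isRoot hQ hx⟩
  have hy : Q.eval y = 0 := Subtype.ext <| funext fun k ↦ by
    have h : ev k (Q.eval y) = 0 := by rw [← eval_map_apply]; exact hx k
    exact h
  exact ⟨mk s y, (eval_map_apply _ _).trans (by rw [hy, map_zero])⟩

lemma isSphericallyComplete : IsSphericallyComplete (RobinsonField s) := by
  intro c ρ hc
  choose C hC using fun i ↦ mk_surjective s (c i)
  obtain rfl : (fun i ↦ mk s (C i)) = c := funext hC
  have hρ i : 0 ≤ ρ i := (norm_nonneg _).trans (hc i i le_rfl)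
  let bound (i m : ℕ) : ℝ≥0∞ := ENNReal.ofReal (ρ i + 1 / (m + 1))
  have hnear (m : ℕ) : ∀ᶠ k in (hyperfilter ℕ : Filter ℕ), ∀ i ∈ Finset.range (m + 1),
      ‖(C m - C i : ℕ → ℂ) k‖ₑ ^ s.exponent k < bound i m := by
    refine (eventually_all_finset _).2 fun i hi ↦ (tendsto_growth s _).eventually_lt_const ?_
    refine (ENNReal.lt_ofReal_iff_toReal_lt (C m - C i).2).2 ?_
    have him := hc i m (Nat.lt_succ_iff.1 (Finset.mem_range.1 hi))
    rw [← map_sub, norm_mk] at him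
    exact him.trans_lt (lt_add_of_pos_right _ Nat.one_div_pos_of_nat)
  obtain ⟨M, hM⟩ := exists_eventually_diagonal Nat.hyperfilter_le_atTop hnear
  let w (k : ℕ) : ℂ := (C (M k) : ℕ → ℂ) k
  have hw (i : ℕ) : growth s (w - C i) ≤ ENNReal.ofReal (ρ i) := by
    have hlim : Tendsto (bound i) atTop (𝓝 (ENNReal.ofReal (ρ i))) := ENNReal.tendsto_ofReal <| by
      simpa using tendsto_one_div_add_atTop_nhds_zero_nat.const_add (ρ i)
    refine ge_of_tendsto hlim ((eventually_ge_atTop i).mono fun m him ↦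
      le_of_tendsto (tendsto_growth s _) ?_)
    filter_upwards [hM m] with k hk
    refine (hk.2 i (Finset.mem_range.2 (by lia))).le.trans (ENNReal.ofReal_le_ofReal ?_)
    gcongr
    exact hk.1
  have hwmod : w ∈ moderate s := by
    simpa using add_mem (show w - C 0 ∈ moderate s from ((hw 0).trans_lt ofReal_lt_top).ne) (C 0).2
  refine ⟨mk s ⟨w, hwmod⟩, fun i ↦ ?_⟩
  rw [← map_sub, norm_mk]
  exact ENNReal.toReal_le_of_le_ofReal (hρ i) (hw i)

end RobinsonField

end RobinsonField

section LojasiewiczInequality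

open MvPolynomial Topology ENNReal

section Derivation

variable {K : Type*} [NormedField K] [IsUltrametricDist K] [Algebra ℝ K]
  [IsTriviallyNormedOverReal K] {D : Derivation ℝ K K}

lemma norm_derivation_lt_one (hD : ∀ z ≠ 0, ‖D z - Real.log ‖z‖ • z‖ < ‖z‖) {z : K}
    (hz : ‖z‖ ≤ 1) : ‖D z‖ < 1 := by
  rcases eq_or_ne z 0 with rfl | hz0
  · simp
  have hDz := (hD z hz0).trans_le hz
  rcases hz.lt_or_eq with hlt | heq
  · rw [← sub_add_cancel (D z) (Real.log ‖z‖ • z)]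
    exact (IsUltrametricDist.norm_add_le_max _ _).trans_lt
      (max_lt hDz ((norm_real_smul_le _ _).trans_lt hlt))
  · simpa [heq] using hDz

lemma norm_le_norm_derivation (hD : ∀ z ≠ 0, ‖D z - Real.log ‖z‖ • z‖ < ‖z‖) {z : K}
    (hz : ‖z‖ < 1) : ‖z‖ ≤ ‖D z‖ := by
  rcases eq_or_ne z 0 with rfl | hz0
  · simp
  by_contra! hlt
  have hlog : Real.log ‖z‖ ≠ 0 := (Real.log_neg (norm_pos_iff.2 hz0) hz).ne
  have hnorm : ‖Real.log ‖z‖ • z‖ = ‖z‖ := by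
    rw [Algebra.smul_def, norm_mul, IsTriviallyNormedOverReal.norm_algebraMap _ hlog, one_mul]
  have h := IsUltrametricDist.norm_add_le_max (D z) (Real.log ‖z‖ • z - D z)
  rw [add_sub_cancel, hnorm, norm_sub_rev] at h
  exact h.not_gt (max_lt hlt (hD z hz0))

end Derivation

variable {σ : Type}

lemma exists_aeval_eq_mk (s : GrowthScale) {M : ℝ} {x : ℕ → σ → ℝ} (hx : ∀ k i, |x k i| ≤ M) :
    ∃ a : σ → RobinsonField s, (∀ i, ‖a i‖ ≤ 1) ∧ ∀ P : MvPolynomial σ ℝ,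
      ∃ p : moderate s, (∀ k, (p : ℕ → ℂ) k = eval (x k) P) ∧ aeval a P = RobinsonField.mk s p := by
  have hgrowth (i : σ) : growth s (fun k ↦ (x k i : ℂ)) ≤ 1 := by
    have hM : ((max M 1 : ℝ) : ℂ) ≠ 0 := by
      exact_mod_cast (zero_lt_one.trans_le (le_max_right M 1)).ne'
    rw [← growth_const (s := s) hM]
    refine growth_mono fun k ↦ ?_
    rw [Complex.norm_real, Complex.norm_real]
    exact (hx k i).trans ((le_max_left M 1).trans (le_abs_self _))
  let b (i : σ) : moderate s := ⟨fun k ↦ x k i, ((hgrowth i).trans_lt one_lt_top).ne⟩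
  refine ⟨RobinsonField.mk s ∘ b, fun i ↦ ENNReal.toReal_mono one_ne_top (hgrowth i),
    fun P ↦ ⟨aeval b P, fun k ↦ ?_, ?_⟩⟩
  · let ev : moderate s →ₐ[ℝ] ℂ := (Pi.evalAlgHom ℝ (fun _ ↦ ℂ) k).comp (moderate s).val
    calc ev (aeval b P) = aeval (algebraMap ℝ ℂ ∘ x k) P := comp_aeval_apply b ev P
      _ = eval (x k) P := by rw [MvPolynomial.aeval_algebraMap_apply]; rfl
  · exact (comp_aeval_apply b (RobinsonField.mk s) P).symm

variable [Fintype σ] {J : Type} {F : MvPolynomial σ ℝ} {ρ : σ → MvPolynomial σ ℝ}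
  {g : J → MvPolynomial σ ℝ}

/-- `ρ` is a gradient of `F` along the algebraic set `{g = 0}`: the chain rule
`D (F a) = ∑ i, ρ i a * D (a i)` holds for every derivation `D` over `ℝ` of a field and every point
`a` of the set over that field. Allowing all fields replaces differentiation along the curves in
the set. -/
def IsGradientOn (F : MvPolynomial σ ℝ) (ρ : σ → MvPolynomial σ ℝ) (g : J → MvPolynomial σ ℝ) :
    Prop :=
  ∀ (K : Type) [Field K] [Algebra ℝ K] (D : Derivation ℝ K K) (a : σ → K),
    (∀ j, aeval a (g j) = 0) → D (aeval a F) = ∑ i, aeval a (ρ i) * D (a i)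

lemma IsGradientOn.exists_norm_le {K : Type} [NormedField K] [IsUltrametricDist K] [Algebra ℝ K]
    [IsTriviallyNormedOverReal K] {D : Derivation ℝ K K} (hρ : IsGradientOn F ρ g)
    (hD : ∀ z ≠ 0, ‖D z - Real.log ‖z‖ • z‖ < ‖z‖) {a : σ → K} (ha : ∀ i, ‖a i‖ ≤ 1)
    (hg : ∀ j, aeval a (g j) = 0) {c : ℝ} (hF₀ : aeval a F - algebraMap ℝ K c ≠ 0)
    (hF₁ : ‖aeval a F - algebraMap ℝ K c‖ < 1) :
    ∃ i, ‖aeval a F - algebraMap ℝ K c‖ < ‖aeval a (ρ i)‖ := by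
  by_contra! hle
  have hDF : D (aeval a F - algebraMap ℝ K c) = ∑ i, aeval a (ρ i) * D (a i) := by
    rw [map_sub, hρ K D a hg, D.map_algebraMap, sub_zero]
  refine (norm_le_norm_derivation hD hF₁).not_gt ?_
  rw [hDF]
  refine Finset.sum_induction _ (‖·‖ < ‖aeval a F - algebraMap ℝ K c‖)
    (fun z w hz hw ↦ (IsUltrametricDist.norm_add_le_max z w).trans_lt (max_lt hz hw))
    (norm_zero.trans_lt (norm_pos_iff.2 hF₀)) fun i _ ↦ ?_
  rw [norm_mul]
  calc ‖aeval a (ρ i)‖ * ‖D (a i)‖ ≤ ‖aeval a F - algebraMap ℝ K c‖ * ‖D (a i)‖ := by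
        gcongr; exact hle i
    _ < ‖aeval a F - algebraMap ℝ K c‖ * 1 := by
        gcongr
        exact norm_derivation_lt_one hD (ha i)
    _ = _ := mul_one _

/-- The scale on which the infinitesimal sequence `e` has value `exp (-1)`. -/
noncomputable def GrowthScale.ofInfinitesimal (e : ℕ → ℝ) (h₀ : ∀ k, 0 < e k) (h₁ : ∀ k, e k < 1)
    (he : Tendsto e atTop (𝓝 0)) : GrowthScale where
  exponent k := (-Real.log (e k))⁻¹
  exponent_pos k := inv_pos.2 (neg_pos.2 (Real.log_neg (h₀ k) (h₁ k)))
  tendsto_exponent := (tendsto_neg_atBot_atTop.comp <| Real.tendsto_log_nhdsGT_zero.comp <|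
    tendsto_nhdsWithin_iff.2 ⟨he, .of_forall h₀⟩).inv_tendsto_atTop

lemma rpow_rpow_exponent_ofInfinitesimal {e : ℕ → ℝ} (h₀ : ∀ k, 0 < e k) (h₁ : ∀ k, e k < 1)
    (he : Tendsto e atTop (𝓝 0)) (θ : ℝ) (k : ℕ) :
    (e k ^ θ) ^ (GrowthScale.ofInfinitesimal e h₀ h₁ he).exponent k = Real.exp (-θ) := by
  have hlog : Real.log (e k) ≠ 0 := (Real.log_neg (h₀ k) (h₁ k)).ne
  rw [← Real.rpow_mul (h₀ k).le, Real.rpow_def_of_pos (h₀ k), GrowthScale.ofInfinitesimal]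
  congr 1
  field_simp

lemma enorm_rpow_exponent_ofInfinitesimal {e : ℕ → ℝ} (h₀ : ∀ k, 0 < e k) (h₁ : ∀ k, e k < 1)
    (he : Tendsto e atTop (𝓝 0)) {r : ℝ} {k : ℕ} (hr : |r| = e k) :
    ‖(r : ℂ)‖ₑ ^ (GrowthScale.ofInfinitesimal e h₀ h₁ he).exponent k =
      ENNReal.ofReal (Real.exp (-1)) := by
  rw [← rpow_rpow_exponent_ofInfinitesimal h₀ h₁ he 1 k, Real.rpow_one,
    ← ENNReal.ofReal_rpow_of_pos (h₀ k), ← hr, ← ofReal_norm, Complex.norm_real, Real.norm_eq_abs]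

lemma IsGradientOn.exists_lt_abs_eval (hρ : IsGradientOn F ρ g) {c M : ℝ} {x : ℕ → σ → ℝ}
    (hx : ∀ k i, |x k i| ≤ M) (hg : ∀ k j, eval (x k) (g j) = 0)
    (h₀ : ∀ k, 0 < |eval (x k) F - c|) (h₁ : ∀ k, |eval (x k) F - c| < 1)
    (hF : Tendsto (fun k ↦ |eval (x k) F - c|) atTop (𝓝 0)) {θ : ℕ → ℝ}
    (hθ : Tendsto θ atTop (𝓝 1)) :
    ∃ k i, |eval (x k) F - c| ^ θ k < |eval (x k) (ρ i)| := by
  by_contra! hle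
  let s := GrowthScale.ofInfinitesimal _ h₀ h₁ hF
  obtain ⟨D, hD⟩ := exists_eulerian_derivation (RobinsonField.isSphericallyComplete s)
  obtain ⟨a, ha, heval⟩ := exists_aeval_eq_mk s hx
  have hga (j : J) : aeval a (g j) = 0 := by
    obtain ⟨p, hp, hap⟩ := heval (g j)
    rw [hap, show p = 0 from Subtype.ext (funext fun k ↦ by simp [hp, hg]), map_zero]
  have hFa : ‖aeval a F - algebraMap ℝ _ c‖ = Real.exp (-1) := by
    obtain ⟨p, hp, hap⟩ := heval (F - C c)
    rw [map_sub, aeval_C] at hap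
    rw [hap, RobinsonField.norm_mk, growth_eq_of_tendsto (v := ENNReal.ofReal (Real.exp (-1))),
      ENNReal.toReal_ofReal (Real.exp_pos _).le]
    refine tendsto_const_nhds.congr fun k ↦ ?_
    rw [hp, enorm_rpow_exponent_ofInfinitesimal h₀ h₁ hF (by simp)]
  obtain ⟨i, hi⟩ := hρ.exists_norm_le hD ha hga (norm_pos_iff.1 (hFa ▸ Real.exp_pos _))
    (hFa ▸ Real.exp_lt_one_iff.2 neg_one_lt_zero)
  refine hi.not_ge ?_
  obtain ⟨p, hp, hap⟩ := heval (ρ i)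
  have hlim : Tendsto (fun k ↦ ENNReal.ofReal (Real.exp (-θ k))) (hyperfilter ℕ)
      (𝓝 (ENNReal.ofReal (Real.exp (-1)))) :=
    ENNReal.tendsto_ofReal <| (Real.continuous_exp.tendsto _).comp <|
      (hθ.mono_left Nat.hyperfilter_le_atTop).neg
  rw [hFa, hap, RobinsonField.norm_mk]
  refine ENNReal.toReal_le_of_le_ofReal (Real.exp_pos _).le
    (le_of_tendsto_of_tendsto' (tendsto_growth s _) hlim fun k ↦ ?_)
  rw [hp, ← rpow_rpow_exponent_ofInfinitesimal h₀ h₁ hF, ← ofReal_norm, Complex.norm_real,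
    Real.norm_eq_abs, ENNReal.ofReal_rpow_of_nonneg (abs_nonneg _) (s.exponent_pos k).le]
  gcongr
  · exact (s.exponent_pos k).le
  · exact hle k i

theorem IsGradientOn.exists_rpow_le_norm (hρ : IsGradientOn F ρ g) (c M : ℝ) :
    ∃ θ ∈ Set.Ioo (0 : ℝ) 1, ∃ η > 0, ∀ x : σ → ℝ, (∀ i, |x i| ≤ M) → (∀ j, eval x (g j) = 0) →
      |eval x F - c| < η → |eval x F - c| ^ θ ≤ ‖fun i ↦ eval x (ρ i)‖ := by
  by_contra! hcon
  let η (k : ℕ) : ℝ := 1 / (k + 1 + 1)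
  have hη₀ (k : ℕ) : 0 < η k := by positivity
  have hη₁ (k : ℕ) : η k < 1 := (div_lt_one (by positivity)).2 (by simpa using k.cast_add_one_pos)
  have hη : Tendsto η atTop (𝓝 0) := by
    simpa [η] using
      (tendsto_add_atTop_iff_nat 1).2 (tendsto_one_div_add_atTop_nhds_zero_nat (𝕜 := ℝ))
  choose x hx hg hxη hlt using fun k ↦
    hcon (1 - η k) ⟨sub_pos.2 (hη₁ k), sub_lt_self _ (hη₀ k)⟩ (η k) (hη₀ k)
  have hpos (k : ℕ) : 0 < |eval (x k) F - c| := (abs_nonneg _).lt_of_ne fun h ↦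
    (norm_nonneg _).not_gt (by simpa [← h, Real.zero_rpow (sub_pos.2 (hη₁ k)).ne'] using hlt k)
  obtain ⟨k, i, hki⟩ := hρ.exists_lt_abs_eval hx hg hpos (fun k ↦ (hxη k).trans (hη₁ k))
    (squeeze_zero (fun _ ↦ abs_nonneg _) (fun k ↦ (hxη k).le) hη)
    (by simpa using hη.const_sub 1)
  exact ((norm_le_pi_norm (fun i ↦ eval (x k) (ρ i)) i).trans_lt (hlt k)).not_gt hki

end LojasiewiczInequality

section MultilinearCompression

open MvPolynomial

lemma sum_pi_eq_sum_sum_subtype {ι M : Type*} [Fintype ι] [DecidableEq ι] {β : ι → Type*}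
    [∀ i, Fintype (β i)] [AddCommMonoid M] (n : ι)
    (h : β n → ((m : {m : ι // m ≠ n}) → β m.1) → M) :
    ∑ c : (i : ι) → β i, h (c n) (fun m ↦ c m.1) = ∑ b, ∑ c', h b c' := by
  rw [← Fintype.sum_prod_type', ← (Equiv.piSplitAt n β).sum_comp]
  rfl

variable {K : Type*} [CommRing K] [Algebra ℝ K]

lemma derivation_prod {ι : Type*} [DecidableEq ι] (D : Derivation ℝ K K) (s : Finset ι)
    (f : ι → K) : D (∏ i ∈ s, f i) = ∑ i ∈ s, D (f i) * ∏ j ∈ s.erase i, f j := by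
  induction s using Finset.induction_on with
  | empty => simp
  | insert a s ha ih =>
    rw [Finset.prod_insert ha, Derivation.leibniz, ih, Finset.sum_insert ha,
      Finset.erase_insert ha, smul_eq_mul, smul_eq_mul, Finset.mul_sum, add_comm, mul_comm]
    refine congrArg _ (Finset.sum_congr rfl fun i hi ↦ ?_)
    have hai : a ≠ i := fun h ↦ ha (h ▸ hi)
    rw [Finset.erase_insert_of_ne hai,
      Finset.prod_insert fun h ↦ ha (Finset.mem_of_mem_erase h), mul_left_comm]

lemma map_derivation_mul {l m n : Type*} [Fintype m] (D : Derivation ℝ K K) (P : Matrix l m K)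
    (Q : Matrix m n K) : (P * Q).map D = P * Q.map D + P.map D * Q := by
  ext i j
  simp [Matrix.mul_apply, Finset.sum_add_distrib, mul_comm]

lemma trace_transpose_mul_map_derivation {m k : Type*} [Fintype m] [Fintype k] [DecidableEq k]
    (D : Derivation ℝ K K) {A : Matrix m k K} (hA : Aᵀ * A = 1) {L : Matrix k k K}
    (hL : L.IsSymm) : 2 * ((A * L)ᵀ * A.map D).trace = 0 := by
  have hskew : (Aᵀ * A.map D)ᵀ = -(Aᵀ * A.map D) := by
    have h := map_derivation_mul D Aᵀ A
    rw [hA, show (1 : Matrix k k K).map D = 0 by ext i j; by_cases hij : i = j <;> simp [hij]] at h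
    rw [eq_neg_iff_add_eq_zero, h, transpose_mul, transpose_transpose, add_comm]
    rfl
  have htr : (L * (Aᵀ * A.map D)).trace = -(L * (Aᵀ * A.map D)).trace := by
    nth_rewrite 1 [← trace_transpose]
    rw [transpose_mul, hskew, hL.eq, Matrix.neg_mul, trace_neg, trace_mul_comm]
  rw [transpose_mul, hL.eq, Matrix.mul_assoc, two_mul, ← eq_neg_iff_add_eq_zero]
  exact htr

variable {N : ℕ} {I r : Fin N → ℕ}

/-- The core tensor `X ×₁ A₁ᵀ ⋯ ×_N A_Nᵀ`, for factor matrices over any `ℝ`-algebra. -/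
def coreTensor (X : ((n : Fin N) → Fin (I n)) → ℝ)
    (A : (n : Fin N) → Matrix (Fin (I n)) (Fin (r n)) K) (c : (n : Fin N) → Fin (r n)) : K :=
  ∑ idx : ((n : Fin N) → Fin (I n)), algebraMap ℝ K (X idx) * ∏ n, A n (idx n) (c n)

/-- The matrix `Gₙ(A)` of `Gmat`, for factor matrices over any `ℝ`-algebra. -/
def algGmat (X : ((n : Fin N) → Fin (I n)) → ℝ)
    (A : (n : Fin N) → Matrix (Fin (I n)) (Fin (r n)) K) (n : Fin N) :
    Matrix (Fin (I n)) ((m : {m : Fin N // m ≠ n}) → Fin (r m.1)) K :=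
  fun j c ↦ ∑ idx : ((m : {m : Fin N // m ≠ n}) → Fin (I m.1)),
    algebraMap ℝ K (X fun i ↦ if h : i = n then Fin.cast (by rw [h]) j else idx ⟨i, h⟩) *
      ∏ m : {m : Fin N // m ≠ n}, A m.1 (idx m) (c m)

/-- The objective `f(A)` of `fval`, for factor matrices over any `ℝ`-algebra. -/
def algFval (X : ((n : Fin N) → Fin (I n)) → ℝ)
    (A : (n : Fin N) → Matrix (Fin (I n)) (Fin (r n)) K) : K :=
  ∑ c, coreTensor X A c ^ 2

/-- The defect `GₙGₙᵀAₙ - AₙAₙᵀGₙGₙᵀAₙ` in the equation of a critical point. On feasible tuples it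
is, up to a factor `2`, a gradient of the objective along the product of Stiefel manifolds. -/
def criticalDefect (X : ((n : Fin N) → Fin (I n)) → ℝ)
    (A : (n : Fin N) → Matrix (Fin (I n)) (Fin (r n)) K) (n : Fin N) :
    Matrix (Fin (I n)) (Fin (r n)) K :=
  algGmat X A n * (algGmat X A n)ᵀ * A n -
    A n * (A n)ᵀ * (algGmat X A n * (algGmat X A n)ᵀ * A n)

variable (X : ((n : Fin N) → Fin (I n)) → ℝ)

section Naturality

variable {L : Type*} [CommRing L] [Algebra ℝ L] (φ : K →ₐ[ℝ] L)
  (A : (n : Fin N) → Matrix (Fin (I n)) (Fin (r n)) K)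

lemma map_algGmat (n : Fin N) : (algGmat X A n).map φ = algGmat X (fun n ↦ (A n).map φ) n := by
  ext i c
  simp [algGmat]

lemma map_algFval : φ (algFval X A) = algFval X fun n ↦ (A n).map φ := by
  simp [algFval, coreTensor]

lemma map_criticalDefect (n : Fin N) :
    (criticalDefect X A n).map φ = criticalDefect X (fun n ↦ (A n).map φ) n := by
  simp only [criticalDefect, Matrix.map_sub φ (map_sub φ), Matrix.map_mul, transpose_map,
    map_algGmat]

end Naturality

lemma sum_mul_prod_eq_transpose_mul_algGmat
    (A : (n : Fin N) → Matrix (Fin (I n)) (Fin (r n)) K) (n : Fin N)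
    (B : Matrix (Fin (I n)) (Fin (r n)) K) (c : (n : Fin N) → Fin (r n)) :
    ∑ idx : ((n : Fin N) → Fin (I n)), algebraMap ℝ K (X idx) *
      (B (idx n) (c n) * ∏ m : {m : Fin N // m ≠ n}, A m.1 (idx m.1) (c m.1)) =
    (Bᵀ * algGmat X A n) (c n) fun m ↦ c m.1 := by
  have hsplit (idx : (n : Fin N) → Fin (I n)) :
      (fun i ↦ if h : i = n then Fin.cast (by rw [h]) (idx n) else idx i) = idx := by
    ext i
    split_ifs with h
    · subst h; rfl
    · rfl
  simp only [Matrix.mul_apply, transpose_apply, algGmat, Finset.mul_sum]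
  rw [← sum_pi_eq_sum_sum_subtype (β := fun i ↦ Fin (I i))]
  refine Finset.sum_congr rfl fun idx _ ↦ ?_
  rw [hsplit, mul_left_comm]

lemma coreTensor_eq (A : (n : Fin N) → Matrix (Fin (I n)) (Fin (r n)) K) (n : Fin N)
    (c : (n : Fin N) → Fin (r n)) :
    coreTensor X A c = ((A n)ᵀ * algGmat X A n) (c n) fun m ↦ c m.1 := by
  simp only [← sum_mul_prod_eq_transpose_mul_algGmat, coreTensor,
    Fintype.prod_eq_mul_prod_subtype_ne _ n]

lemma fval_eq_froSq (A : (n : Fin N) → Matrix (Fin (I n)) (Fin (r n)) ℝ) (n : Fin N) :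
    fval X A = froSq ((A n)ᵀ * Gmat X A n) := by
  calc fval X A = ∑ c, coreTensor X A c ^ 2 := rfl
    _ = froSq ((A n)ᵀ * Gmat X A n) := by
      simp only [coreTensor_eq X A n]
      exact sum_pi_eq_sum_sum_subtype (β := fun i ↦ Fin (r i)) n fun j c' ↦
        (((A n)ᵀ * algGmat X A n) j c') ^ 2

lemma derivation_coreTensor (D : Derivation ℝ K K)
    (A : (n : Fin N) → Matrix (Fin (I n)) (Fin (r n)) K) (c : (n : Fin N) → Fin (r n)) :
    D (coreTensor X A c) = ∑ n, (((A n).map D)ᵀ * algGmat X A n) (c n) fun m ↦ c m.1 := by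
  simp only [← sum_mul_prod_eq_transpose_mul_algGmat]
  rw [Finset.sum_comm, coreTensor, map_sum]
  refine Finset.sum_congr rfl fun idx _ ↦ ?_
  rw [Derivation.leibniz, Derivation.map_algebraMap, smul_zero, add_zero, smul_eq_mul,
    ← Finset.mul_sum, derivation_prod]
  refine congrArg _ (Finset.sum_congr rfl fun n _ ↦ ?_)
  rw [Finset.prod_subtype (p := (· ≠ n)) _ (by simp), map_apply]

lemma derivation_algFval (D : Derivation ℝ K K)
    (A : (n : Fin N) → Matrix (Fin (I n)) (Fin (r n)) K) :
    D (algFval X A) =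
      ∑ n, 2 * ((algGmat X A n * (algGmat X A n)ᵀ * A n)ᵀ * (A n).map D).trace := by
  have hsq (c) : D (coreTensor X A c ^ 2) =
      ∑ n, 2 * (((A n)ᵀ * algGmat X A n) (c n) (fun m ↦ c m.1) *
        (((A n).map D)ᵀ * algGmat X A n) (c n) fun m ↦ c m.1) := by
    rw [pow_two, Derivation.leibniz, smul_eq_mul, ← two_mul, derivation_coreTensor]
    simp only [Finset.mul_sum, ← coreTensor_eq]
  rw [algFval, map_sum, Finset.sum_congr rfl fun c _ ↦ hsq c, Finset.sum_comm]
  refine Finset.sum_congr rfl fun n _ ↦ ?_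
  rw [← Finset.mul_sum, sum_pi_eq_sum_sum_subtype (β := fun i ↦ Fin (r i)) n fun j c' ↦
    ((A n)ᵀ * algGmat X A n) j c' * (((A n).map D)ᵀ * algGmat X A n) j c']
  have htr : (algGmat X A n * (algGmat X A n)ᵀ * A n)ᵀ * (A n).map D =
      ((A n)ᵀ * algGmat X A n) * (((A n).map D)ᵀ * algGmat X A n)ᵀ := by
    simp only [transpose_mul, transpose_transpose, Matrix.mul_assoc]
  rw [htr]
  rfl

lemma derivation_algFval_of_feasible (D : Derivation ℝ K K)
    {A : (n : Fin N) → Matrix (Fin (I n)) (Fin (r n)) K} (hA : ∀ n, (A n)ᵀ * A n = 1) :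
    D (algFval X A) = ∑ n, ∑ i, ∑ j, 2 * criticalDefect X A n i j * D (A n i j) := by
  rw [derivation_algFval]
  refine Finset.sum_congr rfl fun n _ ↦ ?_
  have h := trace_transpose_mul_map_derivation D (hA n)
    (L := (A n)ᵀ * (algGmat X A n * (algGmat X A n)ᵀ * A n))
    (by simp [Matrix.IsSymm, Matrix.mul_assoc])
  rw [← sub_zero (2 * _), ← h, ← mul_sub, ← trace_sub, ← Matrix.sub_mul, ← transpose_sub,
    ← Matrix.mul_assoc, ← criticalDefect, Finset.sum_comm, trace, Finset.mul_sum]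
  simp only [diag_apply, Matrix.mul_apply, transpose_apply, map_apply, Finset.mul_sum, mul_assoc]

variable (I r) in
/-- The factor matrices whose entries are independent variables, through which the objective and
the equations of feasibility become polynomials. -/
noncomputable def genericFactors (n : Fin N) :
    Matrix (Fin (I n)) (Fin (r n)) (MvPolynomial (Σ n : Fin N, Fin (I n) × Fin (r n)) ℝ) :=
  of fun i j ↦ MvPolynomial.X ⟨n, i, j⟩

lemma aeval_feasibility (a : (Σ n : Fin N, Fin (I n) × Fin (r n)) → K) (n : Fin N) (j l) :
    aeval a (((genericFactors I r n)ᵀ * genericFactors I r n) j l - C ((1 : Matrix _ _ ℝ) j l)) =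
      (((genericFactors I r n).map (aeval a))ᵀ * (genericFactors I r n).map (aeval a)) j l -
        (1 : Matrix _ _ K) j l := by
  simp [Matrix.mul_apply, Matrix.one_apply]

lemma aeval_criticalDefect (a : (Σ n : Fin N, Fin (I n) × Fin (r n)) → K) (n : Fin N) (i j) :
    aeval a (C 2 * criticalDefect X (genericFactors I r) n i j) =
      2 * criticalDefect X (fun n ↦ (genericFactors I r n).map (aeval a)) n i j := by
  rw [map_mul, aeval_C, map_ofNat, ← map_criticalDefect, map_apply]

lemma isGradientOn_criticalDefect :
    IsGradientOn (algFval X (genericFactors I r))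
      (fun q ↦ C 2 * criticalDefect X (genericFactors I r) q.1 q.2.1 q.2.2)
      fun q : Σ n : Fin N, Fin (r n) × Fin (r n) ↦
        ((genericFactors I r q.1)ᵀ * genericFactors I r q.1) q.2.1 q.2.2 -
          C ((1 : Matrix _ _ ℝ) q.2.1 q.2.2) := by
  intro K _ _ D a ha
  have hfeas (n : Fin N) :
      ((genericFactors I r n).map (aeval a))ᵀ * (genericFactors I r n).map (aeval a) = 1 :=
    Matrix.ext fun j l ↦ sub_eq_zero.1 <| (aeval_feasibility a n j l).symm.trans (ha ⟨n, j, l⟩)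
  simp only [map_algFval, derivation_algFval_of_feasible X D hfeas, aeval_criticalDefect,
    Fintype.sum_sigma, Fintype.sum_prod_type]
  simp [genericFactors]

lemma abs_apply_le_one_of_transpose_mul_self {m k : Type*} [Fintype m] [DecidableEq k]
    {A : Matrix m k ℝ} (hA : Aᵀ * A = 1) (i : m) (j : k) : |A i j| ≤ 1 := by
  have h : ∑ i, A i j * A i j = 1 := by simpa [Matrix.mul_apply] using congrFun₂ hA j j
  exact abs_le_one_iff_mul_self_le_one.2 <| h ▸
    Finset.single_le_sum (f := fun i ↦ A i j * A i j) (fun _ _ ↦ mul_self_nonneg _)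
      (Finset.mem_univ i)

attribute [local instance] Matrix.normedAddCommGroup

theorem exists_rpow_le_norm_criticalDefect (c : ℝ) :
    ∃ θ ∈ Set.Ioo (0 : ℝ) 1, ∃ η > 0, ∀ A : (n : Fin N) → Matrix (Fin (I n)) (Fin (r n)) ℝ,
      TFeas A → |fval X A - c| < η → |fval X A - c| ^ θ ≤ 2 * ‖criticalDefect X A‖ := by
  obtain ⟨θ, hθ, η, hη, h⟩ := (isGradientOn_criticalDefect (r := r) X).exists_rpow_le_norm c 1
  refine ⟨θ, hθ, η, hη, fun A hA hAη ↦ ?_⟩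
  let x (q : Σ n : Fin N, Fin (I n) × Fin (r n)) : ℝ := A q.1 q.2.1 q.2.2
  have hx : (fun n ↦ (genericFactors I r n).map (aeval x)) = A := by
    ext n i j
    simp [genericFactors, x]
  have hF : eval x (algFval X (genericFactors I r)) = fval X A := by
    rw [← aeval_eq_eval, map_algFval, hx]
    rfl
  rw [← hF] at hAη ⊢
  refine (h x (fun q ↦ abs_apply_le_one_of_transpose_mul_self (hA q.1) _ _) (fun q ↦ ?_)
    hAη).trans ((pi_norm_le_iff_of_nonneg (by positivity)).2 fun q ↦ ?_)
  · rw [← aeval_eq_eval, aeval_feasibility, congrFun hx, hA, sub_self]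
  · rw [← aeval_eq_eval, aeval_criticalDefect, hx, norm_mul, Real.norm_two]
    gcongr
    exact (norm_entry_le_entrywise_sup_norm _).trans (norm_le_pi_norm (criticalDefect X A) q.1)

end MultilinearCompression

section TraceMaximizers

section Trace

variable {m k : Type*} [Fintype m]

lemma zero_le_dotProduct_self (v : m → ℝ) : 0 ≤ v ⬝ᵥ v := by
  simpa using dotProduct_star_self_nonneg v

lemma dotProduct_self_pos {v : m → ℝ} (hv : v ≠ 0) : 0 < v ⬝ᵥ v := by
  simpa using dotProduct_star_self_pos_iff.2 hv

lemma exists_smul_dotProduct_self_eq_one {v : m → ℝ} (hv : v ≠ 0) :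
    ∃ a : ℝ, a * a * (v ⬝ᵥ v) = 1 := by
  have hpos := dotProduct_self_pos hv
  refine ⟨(√(v ⬝ᵥ v))⁻¹, ?_⟩
  rw [← mul_inv, Real.mul_self_sqrt hpos.le, inv_mul_cancel₀ hpos.ne']

lemma dotProduct_mulVec_comm {M : Matrix m m ℝ} (hM : M.IsSymm) (u v : m → ℝ) :
    u ⬝ᵥ M *ᵥ v = v ⬝ᵥ M *ᵥ u := by
  rw [dotProduct_mulVec, ← mulVec_transpose, hM.eq, dotProduct_comm]

lemma transpose_mul_mul_add_vecMulVec {M : Matrix m m ℝ} (hM : M.IsSymm) (B : Matrix m k ℝ)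
    (d : m → ℝ) (x : k → ℝ) :
    (B + vecMulVec d x)ᵀ * M * (B + vecMulVec d x) = Bᵀ * M * B + vecMulVec (Bᵀ *ᵥ M *ᵥ d) x +
      vecMulVec x (Bᵀ *ᵥ M *ᵥ d) + (d ⬝ᵥ M *ᵥ d) • vecMulVec x x := by
  have hvec : d ᵥ* M = M *ᵥ d := by rw [← mulVec_transpose, hM.eq]
  rw [transpose_add, transpose_vecMulVec, Matrix.add_mul, Matrix.add_mul, Matrix.mul_add,
    Matrix.mul_add, mul_vecMulVec, vecMulVec_mul, vecMulVec_mul, vecMulVec_mul_vecMulVec, hvec,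
    ← mulVec_transpose, ← mulVec_mulVec, dotProduct_comm (M *ᵥ d), vecMulVec_smul]
  abel

variable [Fintype k]

lemma froSq_eq_trace (A : Matrix m k ℝ) : froSq A = (Aᵀ * A).trace := by
  simp only [froSq, trace, diag_apply, Matrix.mul_apply, transpose_apply, pow_two]
  exact Finset.sum_comm

lemma froSq_transpose_mul {κ : Type*} [Fintype κ] (A : Matrix m k ℝ) (G : Matrix m κ ℝ) :
    froSq (Aᵀ * G) = (Aᵀ * (G * Gᵀ) * A).trace := by
  rw [froSq_eq_trace, trace_mul_comm]
  simp [Matrix.mul_assoc]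

lemma trace_transpose_mul_mul (M : Matrix m m ℝ) (A : Matrix m k ℝ) :
    (Aᵀ * M * A).trace = ∑ j, Aᵀ j ⬝ᵥ M *ᵥ Aᵀ j := by
  simp only [trace, diag_apply, Matrix.mul_assoc, Matrix.mul_apply_eq_vecMul]
  rfl

lemma froSq_transpose (F : Matrix m k ℝ) : froSq Fᵀ = froSq F :=
  Finset.sum_comm

lemma trace_compress_mul {l : Type*} [Fintype l] (M : Matrix m m ℝ) (B : Matrix m k ℝ)
    (F : Matrix k l ℝ) :
    ((B * F)ᵀ * M * (B * F)).trace = (Bᵀ * M * B * (F * Fᵀ)).trace := by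
  rw [← Matrix.mul_assoc _ F, trace_mul_comm _ Fᵀ, transpose_mul]
  simp only [Matrix.mul_assoc]

lemma mulVec_dotProduct_mulVec [DecidableEq k] {B : Matrix m k ℝ} (hB : Bᵀ * B = 1)
    (x y : k → ℝ) : (B *ᵥ x) ⬝ᵥ (B *ᵥ y) = x ⬝ᵥ y := by
  rw [dotProduct_mulVec, ← mulVec_transpose, mulVec_mulVec, hB, one_mulVec]

end Trace

variable {m k : Type*} [Fintype m] [Fintype k] [DecidableEq k] {M : Matrix m m ℝ}
  {B : Matrix m k ℝ}

/-- `B` maximizes `tr(BᵀMB)` over the matrices with orthonormal columns. -/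
def IsTraceMaximizer (M : Matrix m m ℝ) (B : Matrix m k ℝ) : Prop :=
  Bᵀ * B = 1 ∧ ∀ C : Matrix m k ℝ, Cᵀ * C = 1 → (Cᵀ * M * C).trace ≤ (Bᵀ * M * B).trace

/- For unit vectors, `B + (w - Bx)xᵀ` is again feasible: it exchanges the direction `Bx` in the
range of `B` for `w`. -/
lemma IsTraceMaximizer.exchange_of_unit (hB : IsTraceMaximizer M B) (hM : M.IsSymm) {w : m → ℝ}
    {x : k → ℝ} (hw : w ⬝ᵥ w = 1) (hx : x ⬝ᵥ x = 1) {c : ℝ} (hc : Bᵀ *ᵥ w = c • x) :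
    w ⬝ᵥ M *ᵥ w ≤ (B *ᵥ x) ⬝ᵥ M *ᵥ (B *ᵥ x) := by
  classical
  have hBw : (B *ᵥ x) ⬝ᵥ w = c := by
    rw [dotProduct_comm, dotProduct_mulVec, ← mulVec_transpose, hc, smul_dotProduct, hx,
      smul_eq_mul, mul_one]
  have hd : (w - B *ᵥ x) ⬝ᵥ (w - B *ᵥ x) = 2 - 2 * c := by
    rw [sub_dotProduct, dotProduct_sub, dotProduct_sub, hw, mulVec_dotProduct_mulVec hB.1, hx,
      dotProduct_comm w, hBw]
    ring
  have hBd : Bᵀ *ᵥ (w - B *ᵥ x) = (c - 1) • x := by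
    rw [mulVec_sub, hc, mulVec_mulVec, hB.1, one_mulVec, sub_smul, one_smul]
  have hC : (B + vecMulVec (w - B *ᵥ x) x)ᵀ * (B + vecMulVec (w - B *ᵥ x) x) = 1 := by
    have h := transpose_mul_mul_add_vecMulVec isSymm_one B (w - B *ᵥ x) x
    rw [Matrix.mul_one, Matrix.mul_one, one_mulVec, hB.1, hBd, hd, smul_vecMulVec,
      vecMulVec_smul] at h
    rw [h]
    module
  have h := hB.2 _ hC
  rw [transpose_mul_mul_add_vecMulVec hM, trace_add, trace_add, trace_add, trace_smul,
    trace_vecMulVec, trace_vecMulVec, trace_vecMulVec, hx, dotProduct_comm _ x,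
    dotProduct_mulVec x, vecMul_transpose, mulVec_sub, dotProduct_sub, sub_dotProduct,
    dotProduct_sub, dotProduct_sub, dotProduct_mulVec_comm hM w (B *ᵥ x), smul_eq_mul] at h
  linarith

lemma IsTraceMaximizer.exchange (hB : IsTraceMaximizer M B) (hM : M.IsSymm) {w : m → ℝ}
    {x : k → ℝ} {c : ℝ} (hc : Bᵀ *ᵥ w = c • x) :
    w ⬝ᵥ M *ᵥ w * (x ⬝ᵥ x) ≤ w ⬝ᵥ w * ((B *ᵥ x) ⬝ᵥ M *ᵥ (B *ᵥ x)) := by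
  rcases eq_or_ne w 0 with rfl | hw
  · simp
  rcases eq_or_ne x 0 with rfl | hx
  · simp
  obtain ⟨a, ha⟩ := exists_smul_dotProduct_self_eq_one hw
  obtain ⟨b, hb⟩ := exists_smul_dotProduct_self_eq_one hx
  have hab : Bᵀ *ᵥ (a • w) = (a * c * b * (x ⬝ᵥ x)) • b • x := by
    rw [mulVec_smul, hc, smul_smul, smul_smul]
    congr 1
    linear_combination -a * c * hb
  have h := hB.exchange_of_unit hM (by simpa [mul_assoc] using ha) (by simpa [mul_assoc] using hb)
    hab
  simp only [mulVec_smul, smul_dotProduct, dotProduct_smul, smul_eq_mul, ← mul_assoc] at h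
  calc w ⬝ᵥ M *ᵥ w * (x ⬝ᵥ x) = a * a * (w ⬝ᵥ M *ᵥ w) * ((w ⬝ᵥ w) * (x ⬝ᵥ x)) := by
        linear_combination -(w ⬝ᵥ M *ᵥ w) * (x ⬝ᵥ x) * ha
    _ ≤ b * b * ((B *ᵥ x) ⬝ᵥ M *ᵥ (B *ᵥ x)) * ((w ⬝ᵥ w) * (x ⬝ᵥ x)) :=
        mul_le_mul_of_nonneg_right h
          (mul_nonneg (zero_le_dotProduct_self w) (zero_le_dotProduct_self x))
    _ = w ⬝ᵥ w * ((B *ᵥ x) ⬝ᵥ M *ᵥ (B *ᵥ x)) := by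
        linear_combination (w ⬝ᵥ w) * ((B *ᵥ x) ⬝ᵥ M *ᵥ (B *ᵥ x)) * hb

lemma IsTraceMaximizer.dotProduct_mulVec_eq_zero (hB : IsTraceMaximizer M B) (hM : M.IsSymm)
    {u : m → ℝ} (hu : Bᵀ *ᵥ u = 0) (x : k → ℝ) : u ⬝ᵥ M *ᵥ (B *ᵥ x) = 0 := by
  rcases eq_or_ne x 0 with rfl | hx
  · simp
  have hx' := dotProduct_self_pos hx
  have huB : u ⬝ᵥ (B *ᵥ x) = 0 := by
    rw [dotProduct_mulVec, ← mulVec_transpose, hu, zero_dotProduct]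
  have h (t : ℝ) : 0 ≤ (u ⬝ᵥ u * ((B *ᵥ x) ⬝ᵥ M *ᵥ (B *ᵥ x)) - u ⬝ᵥ M *ᵥ u * (x ⬝ᵥ x)) * (t * t) +
      (-2 * (u ⬝ᵥ M *ᵥ (B *ᵥ x)) * (x ⬝ᵥ x)) * t + 0 := by
    have h := hB.exchange hM (w := B *ᵥ x + t • u) (x := x) (c := 1) (by
      rw [mulVec_add, mulVec_mulVec, hB.1, one_mulVec, mulVec_smul, hu, smul_zero, add_zero,
        one_smul])
    simp only [mulVec_add, mulVec_smul, add_dotProduct, dotProduct_add, smul_dotProduct,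
      dotProduct_smul, smul_eq_mul, mulVec_dotProduct_mulVec hB.1, huB, dotProduct_comm _ u,
      dotProduct_mulVec_comm hM _ u] at h
    linarith
  have hdisc := discrim_le_zero h
  rw [discrim, mul_zero, sub_zero] at hdisc
  simpa [hx'.ne'] using sq_nonpos_iff _ |>.1 hdisc

lemma IsTraceMaximizer.mul_eq (hB : IsTraceMaximizer M B) (hM : M.IsSymm) :
    M * B = B * Bᵀ * (M * B) := by
  classical
  refine Matrix.ext fun i j ↦ sub_eq_zero.1 ?_
  have hu : Bᵀ *ᵥ ((1 - B * Bᵀ) *ᵥ Pi.single i 1) = 0 := by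
    rw [mulVec_mulVec, Matrix.mul_sub, ← Matrix.mul_assoc, hB.1, Matrix.mul_one, Matrix.one_mul,
      sub_self, zero_mulVec]
  have h := hB.dotProduct_mulVec_eq_zero hM hu (Pi.single j 1)
  have hP : (1 - B * Bᵀ).IsSymm := by simp [IsSymm, transpose_sub]
  rw [mulVec_mulVec, dotProduct_comm, dotProduct_mulVec_comm hP] at h
  simp only [mulVec_single_one, single_one_dotProduct, sub_mulVec, one_mulVec] at h
  exact h

end TraceMaximizers

section Eigengap

/-- The eigenvalues of the symmetric matrix `M` have a gap after the `r`-th one: the `r` largest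
are at least `τ₁`, the others at most `τ₂`. This is phrased, as in the Courant–Fischer theorem,
through subspaces on which the quadratic form of `M` is bounded, so that it is visibly stable under
perturbations of `M`. -/
def HasEigengap {m : Type*} [Fintype m] (M : Matrix m m ℝ) (r : ℕ) (τ₁ τ₂ : ℝ) : Prop :=
  ∃ V W : Submodule ℝ (m → ℝ),
    (r ≤ Module.finrank ℝ V ∧ ∀ v ∈ V, τ₁ * (v ⬝ᵥ v) ≤ v ⬝ᵥ M *ᵥ v) ∧
      (Fintype.card m ≤ Module.finrank ℝ W + r ∧ ∀ v ∈ W, v ⬝ᵥ M *ᵥ v ≤ τ₂ * (v ⬝ᵥ v))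

section Spectral

variable {m : Type*} [Fintype m]

lemma HasEigengap.perturb {M M' : Matrix m m ℝ} {r : ℕ} {τ₁ τ₂ δ : ℝ} (hM : HasEigengap M r τ₁ τ₂)
    (hδ : ∀ v, |v ⬝ᵥ (M' - M) *ᵥ v| ≤ δ * (v ⬝ᵥ v)) : HasEigengap M' r (τ₁ - δ) (τ₂ + δ) := by
  obtain ⟨V, W, ⟨hVr, hV⟩, hWr, hW⟩ := hM
  simp only [sub_mulVec, dotProduct_sub, abs_le] at hδ
  exact ⟨V, W, ⟨hVr, fun v hv ↦ by linarith [hV v hv, hδ v]⟩,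
    hWr, fun v hv ↦ by linarith [hW v hv, hδ v]⟩

lemma card_le_finrank_ker_add {S V : Type*} [Fintype S] [AddCommGroup V] [Module ℝ V]
    [FiniteDimensional ℝ V] (f : V →ₗ[ℝ] S → ℝ) :
    Module.finrank ℝ V ≤ Module.finrank ℝ f.ker + Fintype.card S := by
  rw [← f.finrank_range_add_finrank_ker, add_comm]
  gcongr
  simpa using f.range.finrank_le

lemma exists_submodule_forall_mulVec_eq_zero (U : Matrix m m ℝ) (S : Finset m) :
    ∃ V : Submodule ℝ (m → ℝ), Fintype.card m ≤ Module.finrank ℝ V + S.card ∧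
      ∀ v ∈ V, ∀ i ∈ S, (Uᵀ *ᵥ v) i = 0 := by
  let f : (m → ℝ) →ₗ[ℝ] S → ℝ := LinearMap.pi fun i ↦ LinearMap.proj i.1 ∘ₗ Uᵀ.mulVecLin
  refine ⟨f.ker, by simpa using card_le_finrank_ker_add f, fun v hv i hi ↦ ?_⟩
  exact congrFun (LinearMap.mem_ker.1 hv) ⟨i, hi⟩

variable [DecidableEq m]

lemma exists_eq_mul_diagonal_eigenvalues {M : Matrix m m ℝ} (hM : M.IsHermitian) :
    ∃ U : Matrix m m ℝ, Uᵀ * U = 1 ∧ M = U * diagonal hM.eigenvalues * Uᵀ := by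
  refine ⟨hM.eigenvectorUnitary, ?_, ?_⟩
  · simpa [star_eq_conjTranspose] using Unitary.coe_star_mul_self hM.eigenvectorUnitary
  · simpa [Unitary.conjStarAlgAut_apply, star_eq_conjTranspose] using hM.spectral_theorem

lemma dotProduct_mul_diagonal_mulVec (U : Matrix m m ℝ) (μ : m → ℝ) (v : m → ℝ) :
    v ⬝ᵥ (U * diagonal μ * Uᵀ) *ᵥ v = ∑ i, μ i * (Uᵀ *ᵥ v) i ^ 2 := by
  rw [← mulVec_mulVec, ← mulVec_mulVec, dotProduct_mulVec, ← mulVec_transpose, dotProduct]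
  simp only [mulVec_diagonal]
  exact Finset.sum_congr rfl fun i _ ↦ by ring

lemma hasEigengap_of_card_eq {M : Matrix m m ℝ} (hM : M.IsHermitian) {S : Finset m} {τ₁ τ₂ : ℝ}
    (h₁ : ∀ i ∈ S, τ₁ ≤ hM.eigenvalues i) (h₂ : ∀ i ∉ S, hM.eigenvalues i ≤ τ₂) :
    HasEigengap M S.card τ₁ τ₂ := by
  obtain ⟨U, hU, hMU⟩ := exists_eq_mul_diagonal_eigenvalues hM
  have hUt : Uᵀᵀ * Uᵀ = 1 := by rw [transpose_transpose, mul_eq_one_comm.1 hU]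
  have hquad (v : m → ℝ) : v ⬝ᵥ M *ᵥ v = ∑ i, hM.eigenvalues i * (Uᵀ *ᵥ v) i ^ 2 := by
    rw [← dotProduct_mul_diagonal_mulVec, ← hMU]
  have hsq (τ : ℝ) (v : m → ℝ) : τ * (v ⬝ᵥ v) = ∑ i, τ * (Uᵀ *ᵥ v) i ^ 2 := by
    rw [← mulVec_dotProduct_mulVec hUt, dotProduct, Finset.mul_sum]
    simp only [pow_two]
  obtain ⟨V, hVS, hV⟩ := exists_submodule_forall_mulVec_eq_zero U Sᶜ
  obtain ⟨W, hWS, hW⟩ := exists_submodule_forall_mulVec_eq_zero U S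
  refine ⟨V, W, ⟨?_, fun v hv ↦ ?_⟩, hWS, fun v hv ↦ ?_⟩
  · have := S.card_add_card_compl
    lia
  · rw [hquad, hsq]
    refine Finset.sum_le_sum fun i _ ↦ ?_
    by_cases hi : i ∈ S
    · exact mul_le_mul_of_nonneg_right (h₁ i hi) (sq_nonneg _)
    · simp [hV v hv i (Finset.mem_compl.2 hi)]
  · rw [hquad, hsq]
    refine Finset.sum_le_sum fun i _ ↦ ?_
    by_cases hi : i ∈ S
    · simp [hW v hv i hi]
    · exact mul_le_mul_of_nonneg_right (h₂ i hi) (sq_nonneg _)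

end Spectral

lemma eigList_eq_ofFn {m : ℕ} {κ : Type*} [Fintype κ] (Y : Matrix (Fin m) κ ℝ) :
    eigList Y = List.ofFn (isHermitian_mul_conjTranspose_self Y).eigenvalues₀ := by
  have hY := isHermitian_mul_conjTranspose_self Y
  rw [← hY.sort_roots_charpoly_eq_eigenvalues₀, hY.roots_charpoly_eq_eigenvalues, Multiset.map_map]
  refine List.Perm.eq_of_pairwise' (r := (· ≥ ·)) ?_ (Multiset.pairwise_sort _ _) ?_
  · exact List.pairwise_reverse.2 (Multiset.pairwise_sort _ _)
  · rw [← Multiset.coe_eq_coe]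
    simp only [eigList, Multiset.coe_reverse, Multiset.sort_eq, Function.comp_def,
      RCLike.re_to_real, RCLike.ofReal_real_eq_id, id_eq]

lemma getD_ofFn_sub_one_le {n r : ℕ} (hr : r ≤ n) {a : Fin n → ℝ} (ha : Antitone a) {i : Fin n}
    (hi : i < r) : (List.ofFn a).getD (r - 1) 0 ≤ a i := by
  have hr' : r - 1 < (List.ofFn a).length := by
    rw [List.length_ofFn]
    lia
  rw [List.getD_eq_getElem _ _ hr', List.getElem_ofFn]
  exact ha (Nat.le_sub_one_of_lt hi)

lemma le_getD_ofFn {n r : ℕ} {a : Fin n → ℝ} (ha : Antitone a) {i : Fin n} (hi : r ≤ i) :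
    a i ≤ (List.ofFn a).getD r 0 := by
  have hr : r < (List.ofFn a).length := by simpa using hi.trans_lt i.2
  rw [List.getD_eq_getElem _ _ hr, List.getElem_ofFn]
  exact ha hi

lemma exists_hasEigengap_of_sval_lt {m r : ℕ} {κ : Type*} [Fintype κ] {Y : Matrix (Fin m) κ ℝ}
    (h : sval Y (r + 1) < sval Y r) : ∃ τ₁ τ₂, τ₂ < τ₁ ∧ HasEigengap (Y * Yᵀ) r τ₁ τ₂ := by
  have hY := isHermitian_mul_conjTranspose_self Y
  have hlt : (eigList Y).getD r 0 < (eigList Y).getD (r - 1) 0 := by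
    by_contra! hle
    exact h.not_ge (Real.sqrt_le_sqrt hle)
  refine ⟨_, _, hlt, ?_⟩
  rw [eigList_eq_ofFn] at hlt ⊢
  let e : Fin (Fintype.card (Fin m)) ≃ Fin m := Fintype.equivOfCardEq (Fintype.card_fin _)
  have hr : r ≤ Fintype.card (Fin m) := by
    by_contra! hr
    rw [List.getD_eq_default, List.getD_eq_default] at hlt
    · exact hlt.false
    · simpa using Nat.le_sub_one_of_lt hr
    · simpa using hr.le
  let S : Finset (Fin m) := ({j | (j : ℕ) < r} : Finset (Fin _)).map e.toEmbedding
  have hS : S.card = r := by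
    rw [Finset.card_map, Fin.card_filter_val_lt, min_eq_right hr]
  have hmem (i : Fin m) : i ∈ S ↔ (e.symm i : ℕ) < r := by
    rw [Finset.mem_map_equiv, Finset.mem_filter_univ]
  rw [← hS]
  refine hasEigengap_of_card_eq hY (fun i hi ↦ ?_) fun i hi ↦ ?_
  · rw [hS]
    exact getD_ofFn_sub_one_le hr hY.eigenvalues₀_antitone ((hmem i).1 hi)
  · rw [hS]
    exact le_getD_ofFn hY.eigenvalues₀_antitone (not_lt.1 fun h ↦ hi ((hmem i).2 h))

end Eigengap

section Growth

variable {m k : Type*} [Fintype m] [Fintype k] [DecidableEq k] {M : Matrix m m ℝ}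
  {B : Matrix m k ℝ} {τ₁ τ₂ : ℝ}

lemma exists_ne_zero_map_mem_of_finrank_lt {V W : Type*} [AddCommGroup V] [Module ℝ V]
    [FiniteDimensional ℝ V] [AddCommGroup W] [Module ℝ W] [FiniteDimensional ℝ W] (f : V →ₗ[ℝ] W)
    (p : Submodule ℝ W) (h : Module.finrank ℝ W < Module.finrank ℝ V + Module.finrank ℝ p) :
    ∃ v ≠ 0, f v ∈ p := by
  have hq : Module.finrank ℝ (W ⧸ p) < Module.finrank ℝ V := by
    have := p.finrank_quotient_add_finrank
    lia
  obtain ⟨v, hv, hv0⟩ := Submodule.exists_mem_ne_zero_of_ne_bot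
    (LinearMap.ker_ne_bot_of_finrank_lt (f := p.mkQ ∘ₗ f) hq)
  exact ⟨v, hv0, by simpa using hv⟩

lemma IsTraceMaximizer.le_dotProduct_mulVec (hB : IsTraceMaximizer M B) (hM : M.IsSymm)
    (hgap : HasEigengap M (Fintype.card k) τ₁ τ₂) (x : k → ℝ) :
    τ₁ * (x ⬝ᵥ x) ≤ (B *ᵥ x) ⬝ᵥ M *ᵥ (B *ᵥ x) := by
  obtain ⟨V, -, ⟨hVk, hV⟩, -⟩ := hgap
  rcases eq_or_ne x 0 with rfl | hx
  · simp
  obtain ⟨v, hv0, hv⟩ := exists_ne_zero_map_mem_of_finrank_lt (Bᵀ.mulVecLin ∘ₗ V.subtype) (ℝ ∙ x)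
    (by rw [finrank_span_singleton hx, Module.finrank_fintype_fun_eq_card]; lia)
  obtain ⟨c, hc⟩ := Submodule.mem_span_singleton.1 hv
  have hvv : 0 < v.1 ⬝ᵥ v.1 := dotProduct_self_pos (by simpa using hv0)
  have hxx : 0 ≤ x ⬝ᵥ x := zero_le_dotProduct_self x
  refine le_of_mul_le_mul_left ?_ hvv
  calc v.1 ⬝ᵥ v.1 * (τ₁ * (x ⬝ᵥ x)) = τ₁ * (v.1 ⬝ᵥ v.1) * (x ⬝ᵥ x) := by ring
    _ ≤ v.1 ⬝ᵥ M *ᵥ v.1 * (x ⬝ᵥ x) := by gcongr; exact hV v v.2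
    _ ≤ v.1 ⬝ᵥ v.1 * ((B *ᵥ x) ⬝ᵥ M *ᵥ (B *ᵥ x)) := hB.exchange hM hc.symm

lemma IsTraceMaximizer.dotProduct_mulVec_le (hB : IsTraceMaximizer M B) (hM : M.IsSymm)
    (hgap : HasEigengap M (Fintype.card k) τ₁ τ₂) {u : m → ℝ} (hu : Bᵀ *ᵥ u = 0) :
    u ⬝ᵥ M *ᵥ u ≤ τ₂ * (u ⬝ᵥ u) := by
  obtain ⟨-, W, -, hWk, hW⟩ := hgap
  rcases eq_or_ne u 0 with rfl | hu0
  · simp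
  have huu : 0 < u ⬝ᵥ u := dotProduct_self_pos hu0
  obtain ⟨⟨x, t⟩, hxt, hw⟩ := exists_ne_zero_map_mem_of_finrank_lt
    (B.mulVecLin.coprod (LinearMap.toSpanSingleton ℝ (m → ℝ) u)) W
    (by simp only [Module.finrank_fintype_fun_eq_card, Module.finrank_prod, Module.finrank_self]
        lia)
  have huB : u ⬝ᵥ (B *ᵥ x) = 0 := by
    rw [dotProduct_mulVec, ← mulVec_transpose, hu, zero_dotProduct]
  have huM : u ⬝ᵥ M *ᵥ (B *ᵥ x) = 0 := hB.dotProduct_mulVec_eq_zero hM hu x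
  have hmem := hW _ hw
  have hexch := hB.exchange hM (w := u) (x := x) (c := 0) (by rw [hu, zero_smul])
  simp only [LinearMap.coprod_apply, mulVecLin_apply, LinearMap.toSpanSingleton_apply, mulVec_add,
    mulVec_smul, add_dotProduct, dotProduct_add, smul_dotProduct, dotProduct_smul, smul_eq_mul,
    mulVec_dotProduct_mulVec hB.1, huB, huM, dotProduct_comm _ u,
    dotProduct_mulVec_comm hM _ u] at hmem
  have hpos : 0 < x ⬝ᵥ x + t * t * (u ⬝ᵥ u) := by
    rcases eq_or_ne x 0 with rfl | hx
    · have ht : t ≠ 0 := by simpa using hxt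
      simpa using mul_pos (mul_self_pos.2 ht) huu
    · exact add_pos_of_pos_of_nonneg (dotProduct_self_pos hx)
        (mul_nonneg (mul_self_nonneg t) huu.le)
  refine le_of_mul_le_mul_right ?_ hpos
  linear_combination hexch + (u ⬝ᵥ u) * hmem

lemma IsTraceMaximizer.le_trace (hB : IsTraceMaximizer M B) (hM : M.IsSymm)
    (hgap : HasEigengap M (Fintype.card k) τ₁ τ₂) {l : Type*} [Fintype l] (F : Matrix k l ℝ) :
    τ₁ * froSq F ≤ ((B * F)ᵀ * M * (B * F)).trace := by
  rw [trace_transpose_mul_mul, froSq_eq_trace, trace, Finset.mul_sum]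
  exact Finset.sum_le_sum fun j _ ↦ hB.le_dotProduct_mulVec hM hgap (Fᵀ j)

lemma IsTraceMaximizer.trace_le (hB : IsTraceMaximizer M B) (hM : M.IsSymm)
    (hgap : HasEigengap M (Fintype.card k) τ₁ τ₂) {l : Type*} [Fintype l] {U : Matrix m l ℝ}
    (hU : Bᵀ * U = 0) : (Uᵀ * M * U).trace ≤ τ₂ * froSq U := by
  rw [trace_transpose_mul_mul, froSq_eq_trace, trace, Finset.mul_sum]
  exact Finset.sum_le_sum fun j _ ↦ hB.dotProduct_mulVec_le hM hgap 
    (show Bᵀ *ᵥ Uᵀ j = 0 from congrFun (congrArg transpose hU) j)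

lemma IsTraceMaximizer.trace_eq_add (hB : IsTraceMaximizer M B) (hM : M.IsSymm) {l : Type*}
    [Fintype l] (F : Matrix k l ℝ) {U : Matrix m l ℝ} (hU : Bᵀ * U = 0) :
    ((B * F + U)ᵀ * M * (B * F + U)).trace =
      ((B * F)ᵀ * M * (B * F)).trace + (Uᵀ * M * U).trace := by
  have hUMB : Uᵀ * M * (B * F) = 0 := by
    have hUB : Uᵀ * B = 0 := by simpa using congrArg transpose hU
    rw [Matrix.mul_assoc, ← Matrix.mul_assoc M, hB.mul_eq hM]
    simp only [← Matrix.mul_assoc, hUB, Matrix.zero_mul]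
  have hBMU : (B * F)ᵀ * M * U = 0 := by
    simpa [Matrix.mul_assoc, hM.eq] using congrArg transpose hUMB
  rw [transpose_add, Matrix.add_mul, Matrix.add_mul, Matrix.mul_add, Matrix.mul_add, hUMB, hBMU,
    add_zero, zero_add, trace_add]

lemma transpose_mul_self_sub_mul (hB : Bᵀ * B = 1) {A : Matrix m k ℝ} (hA : Aᵀ * A = 1) :
    (A - B * (Bᵀ * A))ᵀ * (A - B * (Bᵀ * A)) = 1 - (Bᵀ * A)ᵀ * (Bᵀ * A) := by
  have h (C : Matrix k k ℝ) : Bᵀ * (B * C) = C := by rw [← Matrix.mul_assoc, hB, Matrix.one_mul]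
  simp [Matrix.sub_mul, Matrix.mul_sub, Matrix.mul_assoc, h, hA]

lemma froSq_sub_mul (hB : Bᵀ * B = 1) {A : Matrix m k ℝ} (hA : Aᵀ * A = 1) :
    froSq (A - B * (Bᵀ * A)) = Fintype.card k - froSq (Bᵀ * A) := by
  rw [froSq_eq_trace, transpose_mul_self_sub_mul hB hA, froSq_eq_trace, trace_sub, trace_one]

/- With `E = B - AAᵀB`, the trace lost when compressing `BᵀMB` by `BᵀA` is `tr(E(BᵀMB)Eᵀ)`, which
the large eigenvalues bound from below. -/
theorem IsTraceMaximizer.growth (hB : IsTraceMaximizer M B) (hM : M.IsSymm)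
    (hgap : HasEigengap M (Fintype.card k) τ₁ τ₂) {A : Matrix m k ℝ} (hA : Aᵀ * A = 1) :
    (τ₁ - τ₂) * (Fintype.card k - froSq (Bᵀ * A)) ≤
      (Bᵀ * M * B).trace - (Aᵀ * M * A).trace := by
  have hWt : (Aᵀ * B)ᵀ = Bᵀ * A := by simp
  have hU : Bᵀ * (A - B * (Bᵀ * A)) = 0 := by
    rw [Matrix.mul_sub, ← Matrix.mul_assoc, hB.1, Matrix.one_mul, sub_self]
  have hH : ((B * (B - A * (Aᵀ * B))ᵀ)ᵀ * M * (B * (B - A * (Aᵀ * B))ᵀ)).trace =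
      (Bᵀ * M * B).trace - ((B * (Bᵀ * A))ᵀ * M * (B * (Bᵀ * A))).trace := by
    rw [trace_compress_mul, trace_compress_mul, transpose_transpose,
      transpose_mul_self_sub_mul hA hB.1, hWt, ← hWt, transpose_transpose, Matrix.mul_sub,
      Matrix.mul_one, trace_sub]
  have hlow := hB.le_trace hM hgap (B - A * (Aᵀ * B))ᵀ
  rw [froSq_transpose, froSq_sub_mul hA hB.1, ← froSq_transpose, hWt, hH] at hlow
  have hup := hB.trace_le hM hgap hU
  rw [froSq_sub_mul hB.1 hA] at hup
  have hadd := hB.trace_eq_add hM (Bᵀ * A) hU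
  rw [add_sub_cancel] at hadd
  linarith

end Growth

section Procrustes

variable {m k : Type*} [Fintype m] [Fintype k] [DecidableEq k]

lemma exists_eq_mul_diagonal_of_transpose_mul_self {V : Matrix k k ℝ} {d : k → ℝ}
    (hV : Vᵀ * V = diagonal (fun i ↦ d i ^ 2)) :
    ∃ Q : Matrix k k ℝ, Qᵀ * Q = 1 ∧ V = Q * diagonal d := by
  let v (j : k) : EuclideanSpace ℝ k := (d j)⁻¹ • WithLp.toLp 2 (Vᵀ j)
  have hgram (i j : k) : Vᵀ i ⬝ᵥ Vᵀ j = if i = j then d i ^ 2 else 0 :=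
    (congrFun (congrFun hV i) j).trans (diagonal_apply ..)
  have hv : Orthonormal ℝ ({j | d j ≠ 0}.domRestrict v) := by
    rw [orthonormal_iff_ite]
    rintro ⟨i, hi⟩ ⟨j, hj⟩
    have hinner : inner ℝ (v i) (v j) = (d i)⁻¹ * (d j)⁻¹ * (Vᵀ i ⬝ᵥ Vᵀ j) := by
      rw [EuclideanSpace.inner_eq_star_dotProduct, dotProduct_comm]
      simp only [v, WithLp.ofLp_smul, star_trivial, smul_dotProduct, dotProduct_smul, smul_eq_mul]
      ring
    rw [Set.domRestrict_apply, Set.domRestrict_apply, hinner, hgram]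
    simp only [Subtype.mk.injEq]
    split_ifs with hij
    · subst hij
      have hi' : d i ≠ 0 := hi
      field_simp
    · rw [mul_zero]
  obtain ⟨b, hb⟩ := hv.exists_orthonormalBasis_extension_of_card_eq (by simp)
  refine ⟨of fun i j ↦ b j i, ?_, ?_⟩
  · ext i j
    simpa [Matrix.mul_apply, one_apply, PiLp.inner_apply, mul_comm] using
      orthonormal_iff_ite.1 b.orthonormal i j
  · ext i j
    rw [mul_diagonal, of_apply]
    by_cases hj : d j = 0
    · have : Vᵀ j = 0 := by
        rw [← dotProduct_self_eq_zero, hgram, if_pos rfl, hj, zero_pow two_ne_zero]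
      rw [hj, mul_zero]
      exact congrFun this i
    · rw [hb j hj]
      simp [v]
      field_simp

lemma exists_svd (W : Matrix k k ℝ) : ∃ (Q U : Matrix k k ℝ) (d : k → ℝ), Qᵀ * Q = 1 ∧
    Uᵀ * U = 1 ∧ (∀ i, 0 ≤ d i) ∧ W = Q * diagonal d * Uᵀ := by
  have hWW : (Wᵀ * W).IsHermitian := by simpa using isHermitian_conjTranspose_mul_self W
  have hpos : (Wᵀ * W).PosSemidef := by simpa using posSemidef_conjTranspose_mul_self W
  obtain ⟨U, hU, hWU⟩ := exists_eq_mul_diagonal_eigenvalues hWW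
  have hV : (W * U)ᵀ * (W * U) = diagonal (fun i ↦ √(hWW.eigenvalues i) ^ 2) := by
    simp only [Real.sq_sqrt (hpos.eigenvalues_nonneg _)]
    calc (W * U)ᵀ * (W * U) = Uᵀ * (Wᵀ * W) * U := by simp only [transpose_mul, Matrix.mul_assoc]
      _ = Uᵀ * (U * diagonal hWW.eigenvalues * Uᵀ) * U := congrArg (Uᵀ * · * U) hWU
      _ = Uᵀ * U * diagonal hWW.eigenvalues * (Uᵀ * U) := by simp only [Matrix.mul_assoc]
      _ = diagonal hWW.eigenvalues := by rw [hU, Matrix.one_mul, Matrix.mul_one]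
  obtain ⟨Q, hQ, hWQ⟩ := exists_eq_mul_diagonal_of_transpose_mul_self hV
  refine ⟨Q, U, fun i ↦ √(hWW.eigenvalues i), hQ, hU, fun i ↦ Real.sqrt_nonneg _, ?_⟩
  rw [← hWQ, Matrix.mul_assoc, mul_eq_one_comm.1 hU, Matrix.mul_one]

lemma trace_mul_mul_transpose {U : Matrix k k ℝ} (hU : Uᵀ * U = 1) (C : Matrix k k ℝ) :
    (U * C * Uᵀ).trace = C.trace := by
  rw [trace_mul_comm, ← Matrix.mul_assoc, hU, Matrix.one_mul]

lemma transpose_mul_self_mul {B : Matrix m k ℝ} (hB : Bᵀ * B = 1) {O : Matrix k k ℝ}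
    (hO : Oᵀ * O = 1) : (B * O)ᵀ * (B * O) = 1 := by
  rw [transpose_mul, Matrix.mul_assoc, ← Matrix.mul_assoc Bᵀ, hB, Matrix.one_mul, hO]

lemma froSq_sub_of_transpose_mul_self {A B : Matrix m k ℝ} (hB : Bᵀ * B = 1) (hA : Aᵀ * A = 1) :
    froSq (B - A) = 2 * (Fintype.card k - (Bᵀ * A).trace) := by
  have hAB : (Aᵀ * B).trace = (Bᵀ * A).trace := by rw [← trace_transpose]; simp
  rw [froSq_eq_trace, transpose_sub, Matrix.sub_mul, Matrix.mul_sub, Matrix.mul_sub, hB, hA,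
    trace_sub, trace_sub, trace_sub, hAB, trace_one]
  ring

lemma exists_orthogonal_froSq_sub_le {A B : Matrix m k ℝ} (hA : Aᵀ * A = 1) (hB : Bᵀ * B = 1) :
    ∃ O : Matrix k k ℝ, Oᵀ * O = 1 ∧
      froSq (B * O - A) ≤ 2 * (Fintype.card k - froSq (Bᵀ * A)) := by
  obtain ⟨Q, U, d, hQ, hU, hd, hW⟩ := exists_svd (Bᵀ * A)
  have hO : (Q * Uᵀ)ᵀ * (Q * Uᵀ) = 1 :=
    transpose_mul_self_mul hQ (by simpa using mul_eq_one_comm.1 hU)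
  have hWU : Bᵀ * (A * U) = Q * diagonal d := by
    rw [← Matrix.mul_assoc, hW, Matrix.mul_assoc, hU, Matrix.mul_one]
  have hd1 (i : k) : d i ^ 2 ≤ 1 := by
    have h := congrFun (congrFun
      (transpose_mul_self_sub_mul hB (transpose_mul_self_mul hA hU)) i) i
    rw [hWU, transpose_mul, Matrix.mul_assoc, ← Matrix.mul_assoc Qᵀ, hQ, Matrix.one_mul,
      diagonal_transpose, diagonal_mul_diagonal, Matrix.sub_apply, one_apply_eq, diagonal_apply_eq,
      ← pow_two] at h
    rw [← sub_nonneg, ← h]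
    exact zero_le_dotProduct_self _
  have hsq : froSq (Bᵀ * A) = ∑ i, d i ^ 2 := by
    have hWW : (Bᵀ * A)ᵀ * (Bᵀ * A) = U * diagonal (fun i ↦ d i ^ 2) * Uᵀ := by
      rw [hW, transpose_mul, transpose_mul, diagonal_transpose, transpose_transpose]
      simp only [Matrix.mul_assoc, ← Matrix.mul_assoc Qᵀ, hQ, Matrix.one_mul,
        ← Matrix.mul_assoc (diagonal d), diagonal_mul_diagonal, pow_two]
    rw [froSq_eq_trace, hWW, trace_mul_mul_transpose hU, trace_diagonal]
  have htr : ((Q * Uᵀ)ᵀ * (Bᵀ * A)).trace = ∑ i, d i := by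
    have hQW : (Q * Uᵀ)ᵀ * (Bᵀ * A) = U * diagonal d * Uᵀ := by
      rw [hW, transpose_mul, transpose_transpose, Matrix.mul_assoc, ← Matrix.mul_assoc Qᵀ,
        ← Matrix.mul_assoc Qᵀ, hQ, Matrix.one_mul, Matrix.mul_assoc]
    rw [hQW, trace_mul_mul_transpose hU, trace_diagonal]
  refine ⟨Q * Uᵀ, hO, ?_⟩
  rw [froSq_sub_of_transpose_mul_self (transpose_mul_self_mul hB hO) hA, transpose_mul,
    Matrix.mul_assoc, htr, hsq]
  gcongr with i
  nlinarith [hd i, hd1 i]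

end Procrustes

section BlockGrowth

lemma abs_dotProduct_mulVec_le {m : Type*} [Fintype m] (E : Matrix m m ℝ) (v : m → ℝ) :
    |v ⬝ᵥ E *ᵥ v| ≤ (∑ i, ∑ j, |E i j|) * (v ⬝ᵥ v) := by
  have hle (i : m) : v i ^ 2 ≤ v ⬝ᵥ v := by
    rw [pow_two]
    exact Finset.single_le_sum (f := fun i ↦ v i * v i) (fun i _ ↦ mul_self_nonneg _)
      (Finset.mem_univ i)
  have hterm (i j : m) : |v i * (E i j * v j)| ≤ |E i j| * (v ⬝ᵥ v) := by
    rw [mul_left_comm, abs_mul, abs_mul]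
    gcongr
    nlinarith [hle i, hle j, sq_abs (v i), sq_abs (v j), sq_nonneg (|v i| - |v j|)]
  calc |v ⬝ᵥ E *ᵥ v| = |∑ i, ∑ j, v i * (E i j * v j)| := by
        simp only [dotProduct, mulVec, Finset.mul_sum]
    _ ≤ ∑ i, ∑ j, |v i * (E i j * v j)| := (Finset.abs_sum_le_sum_abs _ _).trans <|
        Finset.sum_le_sum fun i _ ↦ Finset.abs_sum_le_sum_abs _ _
    _ ≤ ∑ i, ∑ j, |E i j| * (v ⬝ᵥ v) := Finset.sum_le_sum fun i _ ↦
        Finset.sum_le_sum fun j _ ↦ hterm i j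
    _ = (∑ i, ∑ j, |E i j|) * (v ⬝ᵥ v) := by simp only [Finset.sum_mul]

lemma HasEigengap.eventually {m : Type*} [Fintype m] {M : Matrix m m ℝ} {r : ℕ} {τ₁ τ₂ : ℝ}
    (hM : HasEigengap M r τ₁ τ₂) {δ : ℝ} (hδ : 0 < δ) :
    ∀ᶠ M' in nhds M, HasEigengap M' r (τ₁ - δ) (τ₂ + δ) := by
  have hcont : Continuous fun M' : Matrix m m ℝ ↦ ∑ i, ∑ j, |(M' - M) i j| := by
    refine continuous_finsetSum _ fun i _ ↦ continuous_finsetSum _ fun j _ ↦ ?_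
    exact ((continuous_id.sub continuous_const).matrix_elem i j).abs
  have hlt := hcont.tendsto M |>.eventually (gt_mem_nhds (show _ < δ by simpa using hδ))
  filter_upwards [hlt] with M' hM'
  exact hM.perturb fun v ↦ (abs_dotProduct_mulVec_le _ v).trans
    (mul_le_mul_of_nonneg_right hM'.le (zero_le_dotProduct_self v))

lemma froSq_mul_of_transpose_mul_self {k κ : Type*} [Fintype k] [DecidableEq k] [Fintype κ]
    {O : Matrix k k ℝ} (hO : Oᵀ * O = 1) (F : Matrix k κ ℝ) : froSq (O * F) = froSq F := by
  rw [froSq_eq_trace, froSq_eq_trace, transpose_mul, Matrix.mul_assoc, ← Matrix.mul_assoc Oᵀ, hO,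
    Matrix.one_mul]

theorem exists_maximizer_froSq_sub_le {m r : ℕ} {κ : Type*} [Fintype κ] {Y : Matrix (Fin m) κ ℝ}
    (hY : sval Y (r + 1) < sval Y r) : ∃ C > 0, ∀ᶠ G in nhds Y, ∀ A B : Matrix (Fin m) (Fin r) ℝ,
      Aᵀ * A = 1 → IsTraceMaximizer (G * Gᵀ) B → ∃ B', B'ᵀ * B' = 1 ∧
        froSq (B'ᵀ * G) = froSq (Bᵀ * G) ∧
        froSq (B' - A) ≤ C * (froSq (Bᵀ * G) - froSq (Aᵀ * G)) := by
  obtain ⟨τ₁, τ₂, hτ, hgap⟩ := exists_hasEigengap_of_sval_lt hY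
  refine ⟨4 / (τ₁ - τ₂), by have := sub_pos.2 hτ; positivity, ?_⟩
  have hcont : Continuous fun G : Matrix (Fin m) κ ℝ ↦ G * Gᵀ := by fun_prop
  filter_upwards [hcont.tendsto Y |>.eventually
    (hgap.eventually (δ := (τ₁ - τ₂) / 4) (by linarith))] with G hG A B hA hB
  obtain ⟨O, hO, hOle⟩ := exists_orthogonal_froSq_sub_le hA hB.1
  have hsymm : (G * Gᵀ).IsSymm := by simp [IsSymm]
  have hgrowth := hB.growth hsymm (by simpa using hG) hA
  refine ⟨B * O, transpose_mul_self_mul hB.1 hO, ?_, hOle.trans ?_⟩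
  · rw [transpose_mul, Matrix.mul_assoc]
    exact froSq_mul_of_transpose_mul_self (by simpa using mul_eq_one_comm.1 hO) _
  · rw [Fintype.card_fin] at hgrowth ⊢
    rw [froSq_transpose_mul B G, froSq_transpose_mul A G, div_mul_eq_mul_div,
      le_div_iff₀ (sub_pos.2 hτ)]
    linarith

end BlockGrowth

section FiniteLength

open Topology

lemma mul_sub_le_rpow_sub_rpow_mul {x y θ : ℝ} (hx : 0 < x) (hy : 0 ≤ y)
    (hθ : θ ∈ Set.Icc (0 : ℝ) 1) :
    (1 - θ) * (x - y) ≤ (x ^ (1 - θ) - y ^ (1 - θ)) * x ^ θ := by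
  have hbernoulli : y ^ (1 - θ) / x ^ (1 - θ) ≤ 1 + (1 - θ) * (y / x - 1) := by
    rw [← Real.div_rpow hy hx.le]
    simpa using rpow_one_add_le_one_add_mul_self (s := y / x - 1) (p := 1 - θ)
      (by linarith [div_nonneg hy hx.le]) (by linarith [hθ.2]) (by linarith [hθ.1])
  have hpow : x ^ (1 - θ) * x ^ θ = x := by rw [← Real.rpow_add hx, sub_add_cancel, Real.rpow_one]
  rw [div_le_iff₀ (Real.rpow_pos_of_pos hx _)] at hbernoulli
  have h := mul_le_mul_of_nonneg_right hbernoulli (Real.rpow_nonneg hx.le θ)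
  rw [mul_assoc _ (x ^ (1 - θ)), hpow] at h
  have hexpand : (1 + (1 - θ) * (y / x - 1)) * x = x - (1 - θ) * (x - y) := by
    field_simp
    ring
  rw [sub_mul (x ^ (1 - θ)), hpow]
  linarith

lemma le_mul_rpow_sub_rpow {C d x y θ : ℝ} (hC : 0 ≤ C) (hd : 0 ≤ d) (hy : 0 ≤ y) (hyx : y ≤ x)
    (hθ : θ ∈ Set.Ioo (0 : ℝ) 1) (hsq : d ^ 2 ≤ C * (x - y)) (hgrad : x ^ θ ≤ C * d) :
    d ≤ C ^ 2 / (1 - θ) * (x ^ (1 - θ) - y ^ (1 - θ)) := by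
  have hθ' : 0 < 1 - θ := sub_pos.2 hθ.2
  have hP : 0 ≤ x ^ (1 - θ) - y ^ (1 - θ) := sub_nonneg.2 (Real.rpow_le_rpow hy hyx hθ'.le)
  rw [div_mul_eq_mul_div, le_div_iff₀ hθ']
  rcases hd.eq_or_lt with rfl | hdpos
  · rw [zero_mul]
    positivity
  have hx : 0 < x := by
    refine (hy.trans hyx).lt_of_ne' fun hx ↦ ?_
    have hyx' : x - y = 0 := by linarith
    rw [hyx', mul_zero] at hsq
    exact absurd hsq (not_le.2 (pow_pos hdpos 2))
  refine le_of_mul_le_mul_right ?_ hdpos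
  calc d * (1 - θ) * d = (1 - θ) * d ^ 2 := by ring
    _ ≤ (1 - θ) * (C * (x - y)) := by gcongr
    _ = C * ((1 - θ) * (x - y)) := by ring
    _ ≤ C * ((x ^ (1 - θ) - y ^ (1 - θ)) * x ^ θ) :=
      mul_le_mul_of_nonneg_left (mul_sub_le_rpow_sub_rpow_mul hx hy ⟨hθ.1.le, hθ.2.le⟩) hC
    _ ≤ C * ((x ^ (1 - θ) - y ^ (1 - θ)) * (C * d)) := by gcongr
    _ = C ^ 2 * (x ^ (1 - θ) - y ^ (1 - θ)) * d := by ring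

variable {E : Type*} [PseudoMetricSpace E] {a : ℕ → E} {x : E}

theorem tendsto_of_dist_le_sub {ψ : ℕ → ℝ} (hψ : ∀ k, 0 ≤ ψ k) (hψlim : Tendsto ψ atTop (𝓝 0))
    (hstep : ∀ᶠ k in atTop ⊓ comap a (𝓝 x), dist (a (k + 1)) (a k) ≤ ψ k - ψ (k + 1))
    (hx : MapClusterPt x atTop a) : Tendsto a atTop (𝓝 x) := by
  obtain ⟨⟨K, ε⟩, ⟨-, hε⟩, hK⟩ :=
    (atTop_basis.inf (Metric.nhds_basis_ball.comap a)).eventually_iff.1 hstep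
  refine Metric.tendsto_atTop.2 fun ε' hε' ↦ ?_
  have hδ : 0 < min ε ε' / 2 := by positivity
  obtain ⟨k₀, hk₀, hψk₀, hKk₀⟩ := ((hx.frequently (Metric.ball_mem_nhds x hδ)).and_eventually
    ((hψlim.eventually (gt_mem_nhds hδ)).and (eventually_ge_atTop K))).exists
  have htrap (k : ℕ) (hk : k₀ ≤ k) : dist (a k) x ≤ dist (a k₀) x + (ψ k₀ - ψ k) := by
    induction k, hk using Nat.le_induction with
    | base => simp
    | succ k hk ih =>
      have hball : dist (a k) x < ε := by
        linarith [hψ k, min_le_left ε ε', Metric.mem_ball.1 hk₀]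
      linarith [dist_triangle (a (k + 1)) (a k) x, hK ⟨hKk₀.trans hk, hball⟩]
  exact ⟨k₀, fun k hk ↦ by
    linarith [htrap k hk, hψ k, min_le_right ε ε', Metric.mem_ball.1 hk₀]⟩

theorem tendsto_of_sq_dist_le_of_rpow_le {h : ℕ → ℝ} {C θ : ℝ} (hanti : Antitone h)
    (hlim : Tendsto h atTop (𝓝 0)) (hC : 0 ≤ C) (hθ : θ ∈ Set.Ioo (0 : ℝ) 1)
    (hsq : ∀ᶠ k in atTop ⊓ comap a (𝓝 x), dist (a (k + 1)) (a k) ^ 2 ≤ C * (h k - h (k + 1)))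
    (hgrad : ∀ᶠ k in atTop ⊓ comap a (𝓝 x), h k ^ θ ≤ C * dist (a (k + 1)) (a k))
    (hx : MapClusterPt x atTop a) : Tendsto a atTop (𝓝 x) := by
  have hθ' : 0 < 1 - θ := sub_pos.2 hθ.2
  have h0 (k : ℕ) : 0 ≤ h k := hanti.le_of_tendsto hlim k
  refine tendsto_of_dist_le_sub (ψ := fun k ↦ C ^ 2 / (1 - θ) * h k ^ (1 - θ))
    (fun k ↦ mul_nonneg (by positivity) (Real.rpow_nonneg (h0 k) _)) ?_ ?_ hx
  · simpa [Real.zero_rpow hθ'.ne'] using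
      (hlim.rpow_const (Or.inr hθ'.le)).const_mul (C ^ 2 / (1 - θ))
  · filter_upwards [hsq, hgrad] with k hsqk hgradk
    rw [← mul_sub]
    exact le_mul_rpow_sub_rpow hC dist_nonneg (h0 _) (hanti k.le_succ) hθ hsqk hgradk

end FiniteLength

section TupleSpace

attribute [local instance] Matrix.normedAddCommGroup Matrix.normedSpace

open Topology

lemma norm_le_fro {m k : Type*} [Fintype m] [Fintype k] (M : Matrix m k ℝ) : ‖M‖ ≤ fro M := by
  refine (Matrix.norm_le_iff (Real.sqrt_nonneg _)).2 fun i j ↦ Real.abs_le_sqrt ?_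
  calc M i j ^ 2 ≤ ∑ j, M i j ^ 2 :=
        Finset.single_le_sum (f := fun j ↦ M i j ^ 2) (fun _ _ ↦ sq_nonneg _) (Finset.mem_univ j)
    _ ≤ ∑ i, ∑ j, M i j ^ 2 :=
        Finset.single_le_sum (f := fun i ↦ ∑ j, M i j ^ 2)
          (fun _ _ ↦ Finset.sum_nonneg fun _ _ ↦ sq_nonneg _) (Finset.mem_univ i)

lemma continuous_fro {m k : Type*} [Fintype m] [Fintype k] :
    Continuous (fro : Matrix m k ℝ → ℝ) := by
  unfold fro froSq
  fun_prop

lemma tendsto_fro_sub_iff {α m k : Type*} [Fintype m] [Fintype k] {l : Filter α}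
    {M : α → Matrix m k ℝ} {M₀ : Matrix m k ℝ} :
    Tendsto (fun a ↦ fro (M a - M₀)) l (𝓝 0) ↔ Tendsto M l (𝓝 M₀) := by
  refine ⟨fun h ↦ tendsto_iff_norm_sub_tendsto_zero.2 <|
    squeeze_zero (fun _ ↦ norm_nonneg _) (fun _ ↦ norm_le_fro _) h, fun h ↦ ?_⟩
  have hzero : fro (M₀ - M₀) = 0 := by simp [fro, froSq]
  exact hzero ▸ (continuous_fro.tendsto (M₀ - M₀)).comp (h.sub_const M₀)

lemma contDiff_matrix_mul {E l m k : Type*} [NormedAddCommGroup E] [NormedSpace ℝ E] [Fintype l]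
    [Fintype m] [Fintype k] {n : WithTop ℕ∞} {P : E → Matrix l m ℝ} {Q : E → Matrix m k ℝ}
    (hP : ContDiff ℝ n P) (hQ : ContDiff ℝ n Q) : ContDiff ℝ n fun x ↦ P x * Q x :=
  contDiff_pi.2 fun i ↦ contDiff_pi.2 fun j ↦ ContDiff.sum fun p _ ↦
    (contDiff_pi.1 (contDiff_pi.1 hP i) p).mul (contDiff_pi.1 (contDiff_pi.1 hQ p) j)

lemma contDiff_matrix_transpose {E m k : Type*} [NormedAddCommGroup E] [NormedSpace ℝ E]
    [Fintype m] [Fintype k] {n : WithTop ℕ∞} {P : E → Matrix m k ℝ} (hP : ContDiff ℝ n P) :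
    ContDiff ℝ n fun x ↦ (P x)ᵀ :=
  contDiff_pi.2 fun i ↦ contDiff_pi.2 fun j ↦ contDiff_pi.1 (contDiff_pi.1 hP j) i

variable {N : ℕ} {I r : Fin N → ℕ} (X : ((n : Fin N) → Fin (I n)) → ℝ)

lemma contDiff_Gmat (p : WithTop ℕ∞) (n : Fin N) :
    ContDiff ℝ p fun A : (n : Fin N) → Matrix (Fin (I n)) (Fin (r n)) ℝ ↦ Gmat X A n :=
  contDiff_pi.2 fun _ ↦ contDiff_pi.2 fun _ ↦ ContDiff.sum fun _ _ ↦
    contDiff_const.mul <| contDiff_prod fun m _ ↦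
      contDiff_pi.1 (contDiff_pi.1 (contDiff_pi.1 contDiff_id m.1) _) _

lemma continuous_fval :
    Continuous fun A : (n : Fin N) → Matrix (Fin (I n)) (Fin (r n)) ℝ ↦ fval X A := by
  unfold fval
  fun_prop

lemma contDiff_criticalDefect (p : WithTop ℕ∞) :
    ContDiff ℝ p (criticalDefect X :
      ((n : Fin N) → Matrix (Fin (I n)) (Fin (r n)) ℝ) → _) := by
  refine contDiff_pi.2 fun n ↦ ?_
  have hA : ContDiff ℝ p fun A : (n : Fin N) → Matrix (Fin (I n)) (Fin (r n)) ℝ ↦ A n :=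
    contDiff_pi.1 contDiff_id n
  have hG := contDiff_Gmat (r := r) X p n
  have hM := contDiff_matrix_mul (contDiff_matrix_mul hG (contDiff_matrix_transpose hG)) hA
  exact hM.sub (contDiff_matrix_mul (contDiff_matrix_mul hA (contDiff_matrix_transpose hA)) hM)

lemma exists_lipschitzOnWith_criticalDefect :
    ∃ L, LipschitzOnWith L (criticalDefect X)
      {A : (n : Fin N) → Matrix (Fin (I n)) (Fin (r n)) ℝ | TFeas A} := by
  have hproper (n : Fin N) : ProperSpace (Matrix (Fin (I n)) (Fin (r n)) ℝ) :=
    FiniteDimensional.proper_real _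
  obtain ⟨L, hL⟩ := (contDiff_criticalDefect (r := r) X 1).contDiffOn.exists_lipschitzOnWith
    one_ne_zero (convex_closedBall 0 1) (isCompact_closedBall 0 1)
  refine ⟨L, hL.mono fun A hA ↦ mem_closedBall_zero_iff.2 ?_⟩
  exact (pi_norm_le_iff_of_nonneg zero_le_one).2 fun n ↦ (Matrix.norm_le_iff zero_le_one).2
    (abs_apply_le_one_of_transpose_mul_self (hA n))

end TupleSpace

section HOOI

open Topology

attribute [local instance] Matrix.normedAddCommGroup Matrix.normedSpace

variable {N : ℕ} {I r : Fin N → ℕ}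

lemma Gmat_update (X : ((n : Fin N) → Fin (I n)) → ℝ)
    (A : (n : Fin N) → Matrix (Fin (I n)) (Fin (r n)) ℝ) (n : Fin N)
    (B : Matrix (Fin (I n)) (Fin (r n)) ℝ) : Gmat X (Function.update A n B) n = Gmat X A n := by
  ext j c
  refine Finset.sum_congr rfl fun idx _ ↦ congrArg _ (Finset.prod_congr rfl fun m _ ↦ ?_)
  rw [Function.update_of_ne m.2]

/-- The tuple reached by a HOOI step from `A` to `B` once the first `j` blocks are updated. It is
`hyb A B j`, except that `j` is a natural number and may equal `N`. -/
def partialUpdate (A B : (n : Fin N) → Matrix (Fin (I n)) (Fin (r n)) ℝ) (j : ℕ) :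
    (n : Fin N) → Matrix (Fin (I n)) (Fin (r n)) ℝ :=
  fun n ↦ if n.val < j then B n else A n

section PartialUpdate

variable (A B : (n : Fin N) → Matrix (Fin (I n)) (Fin (r n)) ℝ)

lemma partialUpdate_zero : partialUpdate A B 0 = A := by
  ext1 n
  simp [partialUpdate]

lemma partialUpdate_card : partialUpdate A B N = B := by
  ext1 n
  simp [partialUpdate]

lemma partialUpdate_apply_self (n : Fin N) : partialUpdate A B n n = A n := by
  simp [partialUpdate]

lemma partialUpdate_succ (n : Fin N) :
    partialUpdate A B (n + 1) = Function.update (partialUpdate A B n) n (B n) := by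
  ext1 m
  rcases eq_or_ne m n with rfl | hmn
  · simp [partialUpdate]
  · have hiff : m.val < n + 1 ↔ m.val < n := by
      rw [Order.lt_add_one_iff, le_iff_lt_or_eq, or_iff_left (Fin.val_ne_of_ne hmn)]
    simp only [partialUpdate, hiff, Function.update_of_ne hmn]

lemma dist_partialUpdate_le (j : ℕ) : dist A (partialUpdate A B j) ≤ dist B A := by
  refine (dist_pi_le_iff dist_nonneg).2 fun n ↦ ?_
  unfold partialUpdate
  split_ifs
  · exact dist_comm (A n) (B n) ▸ dist_le_pi_dist B A n
  · exact (dist_self (A n)).trans_le dist_nonneg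

variable {A B} in
lemma TFeas.partialUpdate (hA : TFeas A) (hB : TFeas B) (j : ℕ) :
    TFeas (partialUpdate A B j) := fun n ↦ by
  unfold _root_.partialUpdate
  split_ifs
  exacts [hB n, hA n]

end PartialUpdate

variable {X : ((n : Fin N) → Fin (I n)) → ℝ}
  {A : ℕ → (n : Fin N) → Matrix (Fin (I n)) (Fin (r n)) ℝ}

lemma fval_partialUpdate (k : ℕ) (n : Fin N) :
    fval X (partialUpdate (A k) (A (k + 1)) n) = froSq ((A k n)ᵀ * Gseq X A k n) := by
  rw [fval_eq_froSq X _ n, partialUpdate_apply_self]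
  rfl

lemma fval_partialUpdate_succ (k : ℕ) (n : Fin N) :
    fval X (partialUpdate (A k) (A (k + 1)) (n + 1)) =
      froSq ((A (k + 1) n)ᵀ * Gseq X A k n) := by
  rw [fval_eq_froSq X _ n, partialUpdate_succ, Gmat_update, Function.update_self]
  rfl

lemma sum_froSq_sub_eq_fval_sub (k : ℕ) :
    ∑ n, (froSq ((A (k + 1) n)ᵀ * Gseq X A k n) - froSq ((A k n)ᵀ * Gseq X A k n)) =
      fval X (A (k + 1)) - fval X (A k) := by
  simp only [← fval_partialUpdate, ← fval_partialUpdate_succ]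
  let f (j : ℕ) : ℝ := fval X (partialUpdate (A k) (A (k + 1)) j)
  calc ∑ n : Fin N, (f (n + 1) - f n) = f N - f 0 := by
        rw [Fin.sum_univ_eq_sum_range fun j ↦ f (j + 1) - f j, Finset.sum_range_sub]
    _ = fval X (A (k + 1)) - fval X (A k) := by
        simp only [f, partialUpdate_card, partialUpdate_zero]

namespace IsHOOI

lemma froSq_le (hA : IsHOOI X A) (k : ℕ) (n : Fin N) :
    froSq ((A k n)ᵀ * Gseq X A k n) ≤ froSq ((A (k + 1) n)ᵀ * Gseq X A k n) :=
  hA.2 k n _ (hA.1 k n)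

lemma froSq_sub_le (hA : IsHOOI X A) (k : ℕ) (n : Fin N) :
    froSq ((A (k + 1) n)ᵀ * Gseq X A k n) - froSq ((A k n)ᵀ * Gseq X A k n) ≤
      fval X (A (k + 1)) - fval X (A k) := by
  rw [← sum_froSq_sub_eq_fval_sub]
  exact Finset.single_le_sum (f := fun n ↦ froSq ((A (k + 1) n)ᵀ * Gseq X A k n) -
    froSq ((A k n)ᵀ * Gseq X A k n)) (fun n _ ↦ sub_nonneg.2 (hA.froSq_le k n)) (Finset.mem_univ n)

lemma monotone_fval (hA : IsHOOI X A) : Monotone fun k ↦ fval X (A k) :=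
  monotone_nat_of_le_succ fun k ↦ sub_nonneg.1 <| sum_froSq_sub_eq_fval_sub (X := X) k ▸
    Finset.sum_nonneg fun n _ ↦ sub_nonneg.2 (hA.froSq_le k n)

lemma isTraceMaximizer (hA : IsHOOI X A) (k : ℕ) (n : Fin N) :
    IsTraceMaximizer (Gseq X A k n * (Gseq X A k n)ᵀ) (A (k + 1) n) :=
  ⟨hA.1 _ _, fun C hC ↦ by simpa only [froSq_transpose_mul] using hA.2 k n C hC⟩

lemma criticalDefect_partialUpdate (hA : IsHOOI X A) (k : ℕ) (n : Fin N) :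
    criticalDefect X (partialUpdate (A k) (A (k + 1)) (n + 1)) n = 0 := by
  have hGmat : algGmat X (partialUpdate (A k) (A (k + 1)) (n + 1)) n = Gseq X A k n := by
    rw [partialUpdate_succ]
    exact Gmat_update X _ n _
  have hblock : partialUpdate (A k) (A (k + 1)) (n + 1) n = A (k + 1) n := by
    rw [partialUpdate_succ, Function.update_self]
  rw [criticalDefect, hGmat, hblock, sub_eq_zero]
  exact (hA.isTraceMaximizer k n).mul_eq (by simp [IsSymm])

lemma exists_norm_criticalDefect_le (hA : IsHOOI X A) :
    ∃ L ≥ 0, ∀ k, ‖criticalDefect X (A k)‖ ≤ L * dist (A (k + 1)) (A k) := by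
  obtain ⟨L, hL⟩ := exists_lipschitzOnWith_criticalDefect (r := r) X
  refine ⟨L, L.2, fun k ↦ (pi_norm_le_iff_of_nonneg (by positivity)).2 fun n ↦ ?_⟩
  let P := partialUpdate (A k) (A (k + 1)) (n + 1)
  have hP : TFeas P := (hA.1 k).partialUpdate (hA.1 (k + 1)) _
  calc ‖criticalDefect X (A k) n‖
      = dist (criticalDefect X (A k) n) (criticalDefect X P n) := by
        rw [hA.criticalDefect_partialUpdate, dist_zero_right]
    _ ≤ dist (criticalDefect X (A k)) (criticalDefect X P) := dist_le_pi_dist _ _ n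
    _ ≤ L * dist (A k) P := hL.dist_le_mul _ (hA.1 k) _ hP
    _ ≤ L * dist (A (k + 1)) (A k) := by
        gcongr
        exact dist_partialUpdate_le _ _ _

end IsHOOI

lemma critical_iff_criticalDefect_eq_zero {B : (n : Fin N) → Matrix (Fin (I n)) (Fin (r n)) ℝ} :
    Critical X B ↔ criticalDefect X B = 0 := by
  rw [funext_iff]
  exact forall_congr' fun n ↦ sub_eq_zero.symm

variable {Abar : (n : Fin N) → Matrix (Fin (I n)) (Fin (r n)) ℝ} {φ : ℕ → ℕ} {l : Filter ℕ}

lemma isLimitPt_iff :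
    IsLimitPt A Abar ↔ ∃ φ : ℕ → ℕ, StrictMono φ ∧ Tendsto (A ∘ φ) atTop (𝓝 Abar) := by
  simp only [IsLimitPt, tendsto_fro_sub_iff, tendsto_pi_nhds, Function.comp_apply]

namespace IsHOOI

lemma tendsto_fval (hA : IsHOOI X A) (hφ : Tendsto φ atTop atTop)
    (hlim : Tendsto (A ∘ φ) atTop (𝓝 Abar)) :
    Tendsto (fun k ↦ fval X (A k)) atTop (𝓝 (fval X Abar)) :=
  (tendsto_iff_tendsto_subseq_of_monotone hA.monotone_fval hφ).2 <|
    ((continuous_fval X).tendsto Abar).comp hlim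

lemma critical_of_tendsto (hA : IsHOOI X A) (hlim : Tendsto A atTop (𝓝 Abar)) :
    Critical X Abar := by
  obtain ⟨L, -, hL⟩ := hA.exists_norm_criticalDefect_le
  have hstep : Tendsto (fun k ↦ L * dist (A (k + 1)) (A k)) atTop (𝓝 0) := by
    simpa using ((hlim.comp (tendsto_add_atTop_nat 1)).dist hlim).const_mul L
  have hdefect := ((contDiff_criticalDefect X 0).continuous.tendsto Abar).comp hlim
  exact critical_iff_criticalDefect_eq_zero.2 <|
    tendsto_nhds_unique hdefect (squeeze_zero_norm hL hstep)

end IsHOOI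

namespace IsGreedyHOOI

lemma exists_fro_sq_le (hA : IsGreedyHOOI X A) (hnd : NonDeg X Abar) {n : Fin N}
    (hlim : Tendsto (fun k ↦ partialUpdate (A k) (A (k + 1)) n) l (𝓝 Abar)) :
    ∃ C > 0, ∀ᶠ k in l, fro (A (k + 1) n - A k n) ^ 2 ≤
      C * (fval X (A (k + 1)) - fval X (A k)) := by
  obtain ⟨C, hC, hgrowth⟩ := exists_maximizer_froSq_sub_le (hnd n)
  refine ⟨C, hC, ?_⟩
  filter_upwards [(((contDiff_Gmat X 0 n).continuous.tendsto Abar).comp hlim).eventually hgrowth]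
    with k hk
  obtain ⟨B', hB', hmax, hle⟩ := hk _ _ (hA.1.1 k n) (hA.1.isTraceMaximizer k n)
  have hgreedy : fro (A (k + 1) n - A k n) ≤ fro (B' - A k n) :=
    hA.2 k n B' hB' fun D hD ↦ (hA.1.2 k n D hD).trans_eq hmax.symm
  calc fro (A (k + 1) n - A k n) ^ 2 ≤ fro (B' - A k n) ^ 2 :=
        pow_le_pow_left₀ (Real.sqrt_nonneg _) hgreedy 2
    _ = froSq (B' - A k n) :=
        Real.sq_sqrt (Finset.sum_nonneg fun _ _ ↦ Finset.sum_nonneg fun _ _ ↦ sq_nonneg _)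
    _ ≤ C * (froSq ((A (k + 1) n)ᵀ * Gseq X A k n) - froSq ((A k n)ᵀ * Gseq X A k n)) := hle
    _ ≤ C * (fval X (A (k + 1)) - fval X (A k)) :=
        mul_le_mul_of_nonneg_left (hA.1.froSq_sub_le k n) hC.le

lemma tendsto_partialUpdate (hA : IsGreedyHOOI X A) (hnd : NonDeg X Abar)
    (hlim : Tendsto A l (𝓝 Abar))
    (hgain : Tendsto (fun k ↦ fval X (A (k + 1)) - fval X (A k)) l (𝓝 0)) {j : ℕ} (hj : j ≤ N) :
    Tendsto (fun k ↦ partialUpdate (A k) (A (k + 1)) j) l (𝓝 Abar) := by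
  induction j with
  | zero => simpa only [partialUpdate_zero] using hlim
  | succ j ih =>
    let n : Fin N := ⟨j, hj⟩
    have hP : Tendsto (fun k ↦ partialUpdate (A k) (A (k + 1)) n) l (𝓝 Abar) := ih (by lia)
    obtain ⟨C, -, hC⟩ := hA.exists_fro_sq_le hnd hP
    have hfro : Tendsto (fun k ↦ fro (A (k + 1) n - A k n)) l (𝓝 0) := by
      refine squeeze_zero' (.of_forall fun _ ↦ Real.sqrt_nonneg _)
        (hC.mono fun k hk ↦ Real.le_sqrt_of_sq_le hk) ?_
      simpa using (hgain.const_mul C).sqrt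
    have hblock : Tendsto (fun k ↦ A (k + 1) n) l (𝓝 (Abar n)) := by
      have hdiff : Tendsto (fun k ↦ A (k + 1) n - A k n) l (𝓝 0) :=
        tendsto_fro_sub_iff.1 (by simpa only [sub_zero] using hfro)
      simpa using hdiff.add (tendsto_pi_nhds.1 hlim n)
    have hsucc (k : ℕ) : partialUpdate (A k) (A (k + 1)) (j + 1) =
        Function.update (partialUpdate (A k) (A (k + 1)) n) n (A (k + 1) n) :=
      partialUpdate_succ _ _ n
    simpa only [hsucc, Function.update_eq_self] using hP.update n hblock

lemma exists_sq_dist_le (hA : IsGreedyHOOI X A) (hnd : NonDeg X Abar)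
    (hlim : Tendsto A l (𝓝 Abar))
    (hgain : Tendsto (fun k ↦ fval X (A (k + 1)) - fval X (A k)) l (𝓝 0)) :
    ∃ C ≥ 0, ∀ᶠ k in l, dist (A (k + 1)) (A k) ^ 2 ≤
      C * (fval X (A (k + 1)) - fval X (A k)) := by
  choose C hC hfro using fun n : Fin N ↦
    hA.exists_fro_sq_le hnd (hA.tendsto_partialUpdate hnd hlim hgain n.is_lt.le)
  refine ⟨∑ n, C n, Finset.sum_nonneg fun n _ ↦ (hC n).le, ?_⟩
  filter_upwards [eventually_all.2 hfro] with k hk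
  have hgain_nonneg : 0 ≤ fval X (A (k + 1)) - fval X (A k) :=
    sub_nonneg.2 (hA.1.monotone_fval k.le_succ)
  have hsum : 0 ≤ (∑ n, C n) * (fval X (A (k + 1)) - fval X (A k)) :=
    mul_nonneg (Finset.sum_nonneg fun n _ ↦ (hC n).le) hgain_nonneg
  refine (Real.le_sqrt dist_nonneg hsum).1 <|
    (dist_pi_le_iff (Real.sqrt_nonneg _)).2 fun n ↦ Real.le_sqrt_of_sq_le ?_
  calc dist (A (k + 1) n) (A k n) ^ 2 ≤ fro (A (k + 1) n - A k n) ^ 2 := by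
        rw [dist_eq_norm]
        gcongr
        exact norm_le_fro _
    _ ≤ C n * (fval X (A (k + 1)) - fval X (A k)) := hk n
    _ ≤ (∑ n, C n) * (fval X (A (k + 1)) - fval X (A k)) := by
        gcongr
        exact Finset.single_le_sum (fun n _ ↦ (hC n).le) (Finset.mem_univ n)

theorem tendsto (hA : IsGreedyHOOI X A) (hnd : NonDeg X Abar) (hφ : Tendsto φ atTop atTop)
    (hlim : Tendsto (A ∘ φ) atTop (𝓝 Abar)) : Tendsto A atTop (𝓝 Abar) := by
  have hfval := hA.1.tendsto_fval hφ hlim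
  have hgain : Tendsto (fun k ↦ fval X (A (k + 1)) - fval X (A k)) atTop (𝓝 0) := by
    simpa using (hfval.comp (tendsto_add_atTop_nat 1)).sub hfval
  have hgap_nonneg (k : ℕ) : 0 ≤ fval X Abar - fval X (A k) :=
    sub_nonneg.2 (hA.1.monotone_fval.ge_of_tendsto hfval k)
  obtain ⟨C, hC, hsq⟩ := hA.exists_sq_dist_le hnd (l := atTop ⊓ comap A (𝓝 Abar))
    (tendsto_comap.mono_left inf_le_right) (hgain.mono_left inf_le_left)
  obtain ⟨L, hL, hdefect⟩ := hA.1.exists_norm_criticalDefect_le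
  obtain ⟨θ, hθ, η, hη, hloj⟩ := exists_rpow_le_norm_criticalDefect (r := r) X (fval X Abar)
  have hgap : Tendsto (fun k ↦ fval X Abar - fval X (A k)) atTop (𝓝 0) := by
    simpa using hfval.const_sub (fval X Abar)
  refine tendsto_of_sq_dist_le_of_rpow_le (C := C + 2 * L) (fun _ _ hkl ↦
    sub_le_sub_left (hA.1.monotone_fval hkl) _) hgap (by positivity) hθ (hsq.mono fun k hk ↦ ?_)
    (.filter_mono inf_le_left <| (hgap.eventually (gt_mem_nhds hη)).mono fun k hk ↦ ?_)
    (.of_comp hφ hlim.mapClusterPt)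
  · rw [sub_sub_sub_cancel_left]
    refine hk.trans (mul_le_mul_of_nonneg_right ?_ (sub_nonneg.2 (hA.1.monotone_fval k.le_succ)))
    linarith
  · have habs : |fval X (A k) - fval X Abar| = fval X Abar - fval X (A k) := by
      rw [abs_sub_comm, abs_of_nonneg (hgap_nonneg k)]
    have hk' := hloj (A k) (hA.1.1 k) (habs ▸ hk)
    rw [habs] at hk'
    linarith [hdefect k, mul_nonneg hC (dist_nonneg (x := A (k + 1)) (y := A k))]

end IsGreedyHOOI

end HOOI

/-- If a greedy HOOI sequence has a block-nondegenerate limit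
point `Ā`, then `Ā` is a critical point and the whole sequence converges to `Ā`. -/
theorem stmt12 {N : ℕ} {I r : Fin N → ℕ} (hr : ∀ n, r n ≤ I n)
    (X : ((n : Fin N) → Fin (I n)) → ℝ)
    (A : ℕ → (n : Fin N) → Matrix (Fin (I n)) (Fin (r n)) ℝ)
    (hA : IsGreedyHOOI X A)
    (Abar : (n : Fin N) → Matrix (Fin (I n)) (Fin (r n)) ℝ)
    (hfeas : TFeas Abar) (hlim : IsLimitPt A Abar) (hnd : NonDeg X Abar) :
    Critical X Abar ∧
    ∀ n, Filter.Tendsto (fun k => fro (A k n - Abar n)) Filter.atTop (nhds 0) := by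
  obtain ⟨φ, hφ, hφlim⟩ := isLimitPt_iff.1 hlim
  have hconv := hA.tendsto hnd hφ.tendsto_atTop hφlim
  exact ⟨hA.1.critical_of_tendsto hconv, fun n ↦
    tendsto_fro_sub_iff.2 (tendsto_pi_nhds.1 hconv n)⟩
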